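/- arXiv:2412.05942 — 2 statements merged into one kernel-verified Lean document; each statement's English description precedes it below -/
import Mathlib

section
/- For all integers n, M ≥ 1 and every k ∈ K(M,n), the coefficients satisfy C_{B,M,n}(k) ≤ C_{M,n}(k) ≤ 2^{n(M−1)/2} · C_{B,M,n}(k); equivalently, 1 ≤ C_{M,n}(k)/C_{B,M,n}(k) ≤ (2^{n/2})^{M−1}. In particular C_{M,n}(k) ≥ 1 for every k ∈ K(M,n). -/
open scoped BigOperators

noncomputable section

/-- The permutation matrix `P_σ` with entries `P_σ(i,j) = 1` iff `σ(i) = j`. -/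
def permMat {n : ℕ} (σ : Equiv.Perm (Fin n)) : Matrix (Fin n) (Fin n) ℕ :=
  Matrix.of fun i j => if σ i = j then 1 else 0

/-- `k ∈ K(M,n)`: a nonnegative-integer `n×n` matrix all of whose row sums and
column sums equal `M`. -/
def isDS (M n : ℕ) (k : Matrix (Fin n) (Fin n) ℕ) : Prop :=
  (∀ i, ∑ j, k i j = M) ∧ (∀ j, ∑ i, k i j = M)

/-- `C_{M,n}(k)`: the number of `M`-tuples `(σ_1,…,σ_M)` of permutations of `{1,…,n}`
with `Σ_m P_{σ_m} = k`. -/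
def Ccoef (M n : ℕ) (k : Matrix (Fin n) (Fin n) ℕ) : ℕ :=
  Nat.card {σs : Fin M → Equiv.Perm (Fin n) // (∑ m, permMat (σs m)) = k}

/-- `C_{B,M,n}(k) = (M!)^{2n} · (∏_{i,j} (M−k(i,j))!) / ((M!)^{n²} · ∏_{i,j} k(i,j)!)`. -/
def CB (M n : ℕ) (k : Matrix (Fin n) (Fin n) ℕ) : ℝ :=
  ((M.factorial : ℝ) ^ (2 * n) * ∏ i, ∏ j, ((M - k i j).factorial : ℝ)) /
    ((M.factorial : ℝ) ^ (n ^ 2) * ∏ i, ∏ j, ((k i j).factorial : ℝ))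

/-!
Both bounds are proved by induction on `M`, peeling off the first permutation `σ` of a
factorization of `k ∈ K(M + 1, n)`. With `γ = k / (M + 1)`, the Bethe coefficients satisfy
`CB M (k - P_σ) * ∏ i j, (1 - γ i j) = CB (M + 1) k * ∏ i, γ i (σ i) * (1 - γ i (σ i))`, where
factors `1 - γ i j = 0` are to be replaced by `1`.

For the lower bound, summing over `σ` leaves Schrijver's inequality
`∏ i j, (1 - γ i j) ≤ perm (γ i j * (1 - γ i j))` for doubly stochastic `γ`. It is reached by
interpolating monomer-dimer partition functions: with only monomers it is the weighted AM-GM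
inequality, and turning the monomer weights of one edge into a dimer weight is an optimization over
two scalars, which works because a row vacancy and a column vacancy are positively correlated.

For the upper bound, the first permutation of a uniformly random factorization has marginals `γ`.
Comparing its law with sequential sampling of the rows in a random order (Gibbs and Jensen) bounds
its entropy by the Bethe entropy of `γ` plus `n * log 2 / 2`. The Bethe entropy cancels against the
recursion for `CB`, so each step of the induction costs a factor `2 ^ (n / 2)`.
-/

namespace BethePermanent

open Finset Real

section MixedDiff

/-- The negated mixed second difference of `negMulLog` at `y` with steps `a` and `b`. At `y = 0` it
is the entropy gained by splitting an atom of mass `a + b` into atoms of mass `a` and `b`. -/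
def mixedDiff (a b y : ℝ) : ℝ :=
  negMulLog (y + a) + negMulLog (y + b) - negMulLog (y + a + b) - negMulLog y

lemma mixedDiff_comm (a b y : ℝ) : mixedDiff a b y = mixedDiff b a y := by
  simp only [mixedDiff, add_right_comm y a b]
  ring

lemma mixedDiff_zero_left (b y : ℝ) : mixedDiff 0 b y = 0 := by
  simp [mixedDiff]

lemma mixedDiff_mul (c a b y : ℝ) :
    mixedDiff (c * a) (c * b) (c * y) = c * mixedDiff a b y := by
  simp only [mixedDiff, ← mul_add, negMulLog_mul c]
  ring

lemma antitoneOn_mixedDiff {a b : ℝ} (ha : 0 ≤ a) (hb : 0 ≤ b) :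
    AntitoneOn (mixedDiff a b) (Set.Ici 0) := by
  refine antitoneOn_of_hasDerivWithinAt_nonpos (convex_Ici 0)
    (f' := fun y => log (y + a + b) + log y - log (y + a) - log (y + b)) ?_ ?_ ?_
  · unfold mixedDiff
    fun_prop
  all_goals
    rintro y hy
    obtain hy : 0 < y := by simpa using hy
  · refine HasDerivAt.hasDerivWithinAt <| HasDerivAt.congr_deriv
      (((((hasDerivAt_negMulLog (by positivity)).comp_add_const y a).add
      ((hasDerivAt_negMulLog (by positivity)).comp_add_const y b)).sub
      (((hasDerivAt_negMulLog (by positivity)).comp_add_const (y + a) b).comp_add_const y a)).sub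
      (hasDerivAt_negMulLog hy.ne')) ?_
    ring
  · rw [sub_sub, sub_nonpos, ← log_mul (by positivity) (by positivity),
      ← log_mul (by positivity) (by positivity)]
    exact log_le_log (by positivity) (by nlinarith [mul_nonneg ha hb])

lemma hasDerivAt_mixedDiff_left {a b y : ℝ} (ha : 0 < a) (hb : 0 ≤ b) (hy : 0 ≤ y) :
    HasDerivAt (mixedDiff · b y) (log (y + a + b) - log (y + a)) a := by
  refine HasDerivAt.congr_deriv
    (((((hasDerivAt_negMulLog (by positivity)).comp_const_add y a).add_const _).sub
    (((hasDerivAt_negMulLog (by positivity)).comp_add_const (y + a) b).comp_const_add y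
      a)).sub_const _) ?_
  ring

lemma concaveOn_mixedDiff_gap {m b c : ℝ} (hm : 1 ≤ m) (hb : 0 ≤ b) (hbc : b ≤ c) :
    ConcaveOn ℝ (Set.Icc 0 c)
      fun a => 2 * mixedDiff a b 0 - (m + 4) * mixedDiff a b (m * c) := by
  have hc : 0 ≤ m * c := by nlinarith
  have hlog : ∀ {a y : ℝ}, 0 < a → 0 ≤ y → HasDerivAt (fun a => log (y + a + b) - log (y + a))
      ((y + a + b)⁻¹ - (y + a)⁻¹) a := fun {a y} ha hy =>
    (((hasDerivAt_log (by positivity)).comp_add_const (y + a) b).comp_const_add y a).sub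
      ((hasDerivAt_log (by positivity)).comp_const_add y a)
  refine concaveOn_of_hasDerivWithinAt2_nonpos (convex_Icc 0 c) ?_
    (f' := fun a => 2 * (log (0 + a + b) - log (0 + a)) -
      (m + 4) * (log (m * c + a + b) - log (m * c + a)))
    (f'' := fun a => 2 * ((0 + a + b)⁻¹ - (0 + a)⁻¹) -
      (m + 4) * ((m * c + a + b)⁻¹ - (m * c + a)⁻¹)) ?_ ?_ ?_
  · unfold mixedDiff
    fun_prop
  all_goals
    intro a ha
    obtain ⟨ha, hac⟩ : 0 < a ∧ a < c := by simpa using ha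
  · exact (((hasDerivAt_mixedDiff_left ha hb le_rfl).const_mul 2).sub
      ((hasDerivAt_mixedDiff_left ha hb hc).const_mul (m + 4))).hasDerivWithinAt
  · exact (((hlog ha le_rfl).const_mul 2).sub ((hlog ha hc).const_mul (m + 4))).hasDerivWithinAt
  · have hinv : ∀ {x : ℝ}, 0 < x → (x + b)⁻¹ - x⁻¹ = -b / (x * (x + b)) := fun {x} hx => by
      have : x + b ≠ 0 := by positivity
      field_simp
      ring
    have hkey : (m + 4) * (a * (a + b)) ≤ 2 * ((m * c + a) * (m * c + a + b)) := by
      have hcc : m * (3 * (a * (a + b))) ≤ m * (2 * c ^ 2 + 4 * (c * a) + 2 * (c * b)) := by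
        gcongr
        nlinarith
      nlinarith [mul_le_mul_of_nonneg_right hm (by positivity : 0 ≤ a * (a + b)),
        mul_le_mul_of_nonneg_right hm (by positivity : 0 ≤ m * c ^ 2)]
    rw [zero_add, hinv ha, hinv (by positivity), mul_div_assoc', mul_div_assoc', sub_nonpos,
      div_le_div_iff₀ (by positivity) (by positivity)]
    linarith [mul_le_mul_of_nonneg_left hkey hb]

lemma mixedDiff_one_one_le_inv {x : ℝ} (hx : 0 < x) : mixedDiff 1 1 x ≤ x⁻¹ := by
  have hlog : ∀ {u v : ℝ}, 0 < u → 0 < v → log u - log v ≤ u / v - 1 := fun hu hv => by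
    rw [← log_div hu.ne' hv.ne']
    exact log_le_sub_one_of_pos (div_pos hu hv)
  have hgap : (x + 1) * (log (x + 2) - log (x + 1) - (log (x + 1) - log x)) ≤ -(x + 1)⁻¹ := by
    have := hlog (by positivity : 0 < x * (x + 2)) (by positivity : 0 < (x + 1) * (x + 1))
    rw [log_mul (by positivity) (by positivity), log_mul (by positivity) (by positivity)] at this
    calc _ ≤ (x + 1) * (x * (x + 2) / ((x + 1) * (x + 1)) - 1) :=
          mul_le_mul_of_nonneg_left (by linarith) (by positivity)
      _ = -(x + 1)⁻¹ := by field_simp; ring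
  have hupper : log (x + 2) - log (x + 1) ≤ (x + 1)⁻¹ :=
    (hlog (by positivity) (by positivity)).trans_eq (by field_simp; ring)
  have hlower : log (x + 1) - log x ≤ x⁻¹ :=
    (hlog (by positivity) hx).trans_eq (by field_simp; ring)
  have hexpand : mixedDiff 1 1 x =
      (x + 1) * (log (x + 2) - log (x + 1) - (log (x + 1) - log x)) +
        (log (x + 2) - log (x + 1)) + (log (x + 1) - log x) := by
    simp only [mixedDiff, negMulLog, add_assoc x 1 1, one_add_one_eq_two]
    ring
  linarith

lemma mixedDiff_one_one_le {m : ℕ} (hm : 1 ≤ m) :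
    (m + 4) * mixedDiff 1 1 m ≤ 2 * mixedDiff 1 1 0 := by
  have h0 : mixedDiff 1 1 0 = 2 * log 2 := by norm_num [mixedDiff, negMulLog]
  rw [h0]
  obtain rfl | rfl | h3 : m = 1 ∨ m = 2 ∨ 3 ≤ m := by omega
  · have : log (3 ^ 15) ≤ log (2 ^ 24) := log_le_log (by norm_num) (by norm_num)
    rw [log_pow, log_pow] at this
    norm_num [mixedDiff, negMulLog] at this ⊢
    linarith
  · have h3 : log (2 ^ 14) ≤ log (3 ^ 9) := log_le_log (by norm_num) (by norm_num)
    have h4 : log 4 = 2 * log 2 := by rw [← log_rpow two_pos]; norm_num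
    rw [log_pow, log_pow] at h3
    norm_num [mixedDiff, negMulLog, h4] at h3 ⊢
    linarith
  · have hm3 : (3 : ℝ) ≤ m := by exact_mod_cast h3
    have hm0 : (0 : ℝ) < m := by linarith
    calc ((m : ℝ) + 4) * mixedDiff 1 1 m ≤ (m + 4) * (m : ℝ)⁻¹ := by
          gcongr
          exact mixedDiff_one_one_le_inv hm0
      _ ≤ 7 / 3 := by
        rw [← div_eq_mul_inv, div_le_div_iff₀ hm0 (by norm_num)]
        linarith
      _ ≤ 2 * (2 * log 2) := by linarith [log_two_gt_d9]

-- Concavity in `a` and, by symmetry, in `b` reduces the claim to the corner `a = b = c`.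
lemma mixedDiff_le {m : ℕ} (hm : 1 ≤ m) {a b c : ℝ} (ha : 0 ≤ a) (hb : 0 ≤ b) (hac : a ≤ c)
    (hbc : b ≤ c) : (m + 4) * mixedDiff a b (m * c) ≤ 2 * mixedDiff a b 0 := by
  have hc : 0 ≤ c := ha.trans hac
  have hcorner : 0 ≤ 2 * mixedDiff c c 0 - (m + 4) * mixedDiff c c (m * c) := by
    have h₀ := mixedDiff_mul c 1 1 0
    have h₁ := mixedDiff_mul c 1 1 m
    rw [mul_one, mul_zero] at h₀
    rw [mul_one, mul_comm c] at h₁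
    rw [h₀, h₁]
    linarith [mul_le_mul_of_nonneg_left (mixedDiff_one_one_le hm) hc]
  have hextend : ∀ {a b : ℝ}, 0 ≤ a → a ≤ c → 0 ≤ b → b ≤ c →
      0 ≤ 2 * mixedDiff c b 0 - (m + 4) * mixedDiff c b (m * c) →
      0 ≤ 2 * mixedDiff a b 0 - (m + 4) * mixedDiff a b (m * c) := fun ha hac hb hbc h => by
    have := (concaveOn_mixedDiff_gap (m := m) (mod_cast hm) hb hbc).min_le_of_mem_Icc
      (Set.left_mem_Icc.2 hc) (Set.right_mem_Icc.2 hc) ⟨ha, hac⟩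
    simpa [h, mixedDiff_zero_left] using this
  have hedge : 0 ≤ 2 * mixedDiff c b 0 - (m + 4) * mixedDiff c b (m * c) := by
    simpa only [mixedDiff_comm c b] using hextend hb hbc hc le_rfl hcorner
  linarith [hextend ha hac hb hbc hedge]

end MixedDiff

section OrderEntropy

/-- For `1 ≤ s`, the probability that, in a uniformly random ordering of `n` elements, a given
element together with `s - 1` given others are exactly the elements not preceding it. These are
the entries of the Leibniz harmonic triangle. -/
def orderWeight (n s : ℕ) : ℝ := ((s - 1).factorial * (n - s).factorial : ℝ) / n.factorial

lemma orderWeight_nonneg (n s : ℕ) : 0 ≤ orderWeight n s := by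
  unfold orderWeight
  positivity

lemma orderWeight_self {n : ℕ} (hn : 1 ≤ n) : orderWeight n n = (n : ℝ)⁻¹ := by
  obtain ⟨n, rfl⟩ := Nat.exists_eq_add_of_le' hn
  simp only [orderWeight, Nat.add_sub_cancel, Nat.sub_self, Nat.factorial_succ,
    Nat.factorial_zero]
  push_cast
  field_simp

lemma orderWeight_one {n : ℕ} (hn : 1 ≤ n) : orderWeight n 1 = (n : ℝ)⁻¹ := by
  obtain ⟨n, rfl⟩ := Nat.exists_eq_add_of_le' hn
  simp only [orderWeight, Nat.add_sub_cancel, Nat.sub_self, Nat.factorial_succ,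
    Nat.factorial_zero]
  push_cast
  field_simp

lemma orderWeight_succ {n s : ℕ} (hs : s ≤ n) :
    orderWeight (n + 1) s = (n + 1 - s) / (n + 1) * orderWeight n s := by
  obtain ⟨d, rfl⟩ := Nat.exists_eq_add_of_le hs
  have hd : s + d + 1 - s = d + 1 := by omega
  rw [orderWeight, orderWeight, hd, Nat.add_sub_cancel_left, Nat.factorial_succ, Nat.factorial_succ]
  push_cast
  field_simp
  ring

lemma orderWeight_add {n s : ℕ} (hs : 1 ≤ s) (hsn : s ≤ n) :
    orderWeight (n + 1) s + orderWeight (n + 1) (s + 1) = orderWeight n s := by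
  obtain ⟨t, rfl⟩ := Nat.exists_eq_add_of_le' hs
  obtain ⟨d, rfl⟩ := Nat.exists_eq_add_of_le hsn
  rw [orderWeight_succ hsn]
  have hd : t + 1 + d + 1 - (t + 1 + 1) = d := by omega
  rw [orderWeight, orderWeight, hd, Nat.add_sub_cancel, Nat.add_sub_cancel,
    Nat.add_sub_cancel_left, Nat.factorial_succ (t + 1 + d), Nat.factorial_succ t]
  push_cast
  field_simp
  ring

variable {ι : Type*}

lemma sum_powerset_orderWeight (s : Finset ι) {k : ℕ} (hk : 1 ≤ k) :
    ∑ S ∈ s.powerset, orderWeight (#s + k) (#S + 1) = (k : ℝ)⁻¹ := by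
  classical
  induction s using Finset.induction_on with
  | empty => simp [orderWeight_one hk]
  | insert a s ha ih =>
    rw [sum_powerset_insert ha, ← sum_add_distrib, ← ih]
    refine sum_congr rfl fun S hS => ?_
    have hSs := mem_powerset.1 hS
    rw [card_insert_of_notMem ha, card_insert_of_notMem fun h => ha (hSs h), add_right_comm]
    exact orderWeight_add (by omega) (by have := card_le_card hSs; omega)

/-- The entropy-like average, over all orderings of `s`, of
`-∑ j, p j * log (∑ p over the elements not preceding j)`. -/
def orderEntropy (s : Finset ι) (p : ι → ℝ) : ℝ :=
  ∑ S ∈ s.powerset, orderWeight #s #S * negMulLog (∑ i ∈ S, p i)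

lemma orderEntropy_singleton (a : ι) (p : ι → ℝ) : orderEntropy {a} p = negMulLog (p a) := by
  classical
  have hpow : ({a} : Finset ι).powerset = {∅, {a}} := rfl
  simp [orderEntropy, hpow, orderWeight]

lemma orderEntropy_pair [DecidableEq ι] {a b : ι} (hab : a ≠ b) (p : ι → ℝ) :
    orderEntropy {a, b} p = (negMulLog (p a) + negMulLog (p b) + negMulLog (p a + p b)) / 2 := by
  have ha : a ∉ ({b} : Finset ι) := by simpa using hab
  have hpow : ({b} : Finset ι).powerset = {∅, {b}} := rfl
  simp [orderEntropy, sum_powerset_insert ha, hpow, orderWeight, hab, sum_pair hab]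
  ring

lemma orderEntropy_insert_insert [DecidableEq ι] {s : Finset ι} {a b : ι} (ha : a ∉ s)
    (hb : b ∉ s) (hab : a ≠ b) {p q : ι → ℝ} (hq : ∀ i ∈ s, q i = p i) (hqb : q b = p a + p b) :
    orderEntropy (insert a (insert b s)) p = orderEntropy (insert b s) q +
      ∑ S ∈ s.powerset, orderWeight (#s + 2) (#S + 1) * mixedDiff (p a) (p b) (∑ i ∈ S, p i) := by
  have ha' : a ∉ insert b s := by simp [ha, hab]
  simp only [orderEntropy, sum_powerset_insert hb, sum_powerset_insert ha',
    card_insert_of_notMem hb, card_insert_of_notMem ha', ← sum_add_distrib]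
  refine sum_congr rfl fun S hS => ?_
  have hSs := mem_powerset.1 hS
  have hcard := card_le_card hSs
  have hbS : b ∉ S := fun h => hb (hSs h)
  have haS : a ∉ S := fun h => ha (hSs h)
  have haS' : a ∉ insert b S := by simp [haS, hab]
  have hempty : orderWeight (#s + 1) #S * negMulLog (∑ i ∈ S, p i) =
      (orderWeight (#s + 1 + 1) #S + orderWeight (#s + 1 + 1) (#S + 1)) *
        negMulLog (∑ i ∈ S, p i) := by
    obtain rfl | hne := S.eq_empty_or_nonempty
    · simp
    · rw [orderWeight_add (card_pos.2 hne) (by omega)]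
  simp only [sum_insert hbS, sum_insert haS, sum_insert haS', hqb,
    sum_congr rfl fun i hi => hq i (hSs hi), card_insert_of_notMem hbS, card_insert_of_notMem haS,
    card_insert_of_notMem haS']
  rw [hempty, ← orderWeight_add (n := #s + 1) (s := #S + 1) (by omega) (by omega)]
  simp only [mixedDiff]
  ring_nf

lemma mixedDiff_le_sum {s : Finset ι} (hs : s.Nonempty) {p : ι → ℝ} {a b : ℝ} (ha : 0 ≤ a)
    (hb : 0 ≤ b) (hpa : ∀ i ∈ s, a ≤ p i) (hpb : ∀ i ∈ s, b ≤ p i) :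
    mixedDiff a b (∑ i ∈ s, p i) ≤
      ∑ S ∈ s.powerset, orderWeight (#s + 2) (#S + 1) * mixedDiff a b (∑ i ∈ S, p i) := by
  set r := ∑ i ∈ s, p i
  have hcard : (0 : ℝ) < #s := mod_cast card_pos.2 hs
  have hp : ∀ i ∈ s, 0 ≤ p i := fun i hi => ha.trans (hpa i hi)
  have hbound : (#s + 4) * mixedDiff a b r ≤ 2 * mixedDiff a b 0 := by
    have := mixedDiff_le (c := r / #s) (card_pos.2 hs) ha hb
      ((le_div_iff₀' hcard).2 (by simpa using card_nsmul_le_sum s p a hpa))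
      ((le_div_iff₀' hcard).2 (by simpa using card_nsmul_le_sum s p b hpb))
    rwa [mul_div_cancel₀ r hcard.ne'] at this
  have hterm : ∀ S ∈ s.powerset, 0 ≤
      orderWeight (#s + 2) (#S + 1) * (mixedDiff a b (∑ i ∈ S, p i) - mixedDiff a b r) :=
    fun S hS => mul_nonneg (orderWeight_nonneg _ _) <| sub_nonneg.2 <|
      antitoneOn_mixedDiff ha hb (sum_nonneg fun i hi => hp i (mem_powerset.1 hS hi))
        (sum_nonneg hp) (sum_le_sum_of_subset_of_nonneg (mem_powerset.1 hS) fun i hi _ => hp i hi)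
  have hempty := single_le_sum hterm (empty_mem_powerset s)
  simp only [mul_sub, sum_sub_distrib, ← sum_mul, sum_powerset_orderWeight s one_le_two,
    card_empty, sum_empty, zero_add, orderWeight_one (show 1 ≤ #s + 2 by omega)] at hempty
  have hgap : mixedDiff a b r / 2 ≤ ((#s + 2 : ℕ) : ℝ)⁻¹ * (mixedDiff a b 0 - mixedDiff a b r) := by
    push_cast
    rw [inv_mul_eq_div, div_le_div_iff₀ two_pos (by positivity)]
    linarith
  push_cast at hempty hgap
  linarith

lemma exists_two_least [DecidableEq ι] {s : Finset ι} (hs : 2 ≤ #s) (p : ι → ℝ) :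
    ∃ a b : ι, ∃ t : Finset ι, a ∉ t ∧ b ∉ t ∧ a ≠ b ∧ s = insert a (insert b t) ∧
      (∀ i ∈ t, p a ≤ p i) ∧ ∀ i ∈ t, p b ≤ p i := by
  obtain ⟨a, ha, hamin⟩ := s.exists_min_image p (card_pos.1 (by omega))
  have hcard := card_erase_of_mem ha
  obtain ⟨b, hb, hbmin⟩ := (s.erase a).exists_min_image p (card_pos.1 (by omega))
  refine ⟨a, b, (s.erase a).erase b, by simp, by simp, (ne_of_mem_erase hb).symm, ?_, ?_, ?_⟩
  · rw [insert_erase hb, insert_erase ha]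
  · exact fun i hi => hamin i (mem_of_mem_erase (mem_of_mem_erase hi))
  · exact fun i hi => hbmin i (mem_of_mem_erase hi)

lemma sum_negMulLog_one_sub_insert_insert_le [DecidableEq ι] {t : Finset ι} (ht : t.Nonempty)
    {a b : ι} (ha : a ∉ t) (hb : b ∉ t) (hab : a ≠ b) {p q : ι → ℝ} (hpa : 0 ≤ p a) (hpb : 0 ≤ p b)
    (hap : ∀ i ∈ t, p a ≤ p i) (hbp : ∀ i ∈ t, p b ≤ p i)
    (hsum : ∑ i ∈ insert a (insert b t), p i = 1)
    (hq : ∀ i ∈ t, q i = p i) (hqb : q b = p a + p b) {c : ℝ}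
    (h : ∑ i ∈ insert b t, negMulLog (1 - q i) ≤ orderEntropy (insert b t) q + c) :
    ∑ i ∈ insert a (insert b t), negMulLog (1 - p i) ≤
      orderEntropy (insert a (insert b t)) p + c := by
  have ha' : a ∉ insert b t := by simp [ha, hab]
  rw [sum_insert ha', sum_insert hb] at hsum ⊢
  have hgain := mixedDiff_le_sum ht hpa hpb hap hbp
  rw [orderEntropy_insert_insert ha hb hab hq hqb]
  rw [sum_insert hb, hqb, sum_congr rfl fun i hi => by rw [hq i hi]] at h
  set r := ∑ i ∈ t, p i
  rw [show 1 - (p a + p b) = r by linarith] at h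
  rw [show 1 - p a = r + p b by linarith, show 1 - p b = r + p a by linarith]
  have hdiff : mixedDiff (p a) (p b) r =
      negMulLog (r + p a) + negMulLog (r + p b) - negMulLog r := by
    rw [mixedDiff, show r + p a + p b = 1 by linarith, negMulLog_one, sub_zero]
  linarith

/-
Merging the two smallest atoms changes the left side by `mixedDiff (p a) (p b) r`, where `r` is
the remaining mass, and `orderEntropy` by an average of larger second differences, so the claim
reduces to distributions on two points.
-/
theorem sum_negMulLog_one_sub_le (s : Finset ι) (p : ι → ℝ) (hp : ∀ i ∈ s, 0 ≤ p i)
    (hs : ∑ i ∈ s, p i = 1) :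
    ∑ i ∈ s, negMulLog (1 - p i) ≤ orderEntropy s p + log 2 / 2 := by
  classical
  induction s using Finset.strongInduction generalizing p with
  | H s ih =>
  obtain hcard | hcard | hcard : #s = 0 ∨ #s = 1 ∨ 2 ≤ #s := by omega
  · simp [card_eq_zero.1 hcard] at hs
  · obtain ⟨a, rfl⟩ := card_eq_one.1 hcard
    rw [sum_singleton] at hs
    simpa [orderEntropy_singleton, hs] using div_nonneg (log_nonneg one_le_two) two_pos.le
  obtain ⟨a, b, t, ha, hb, hab, rfl, hap, hbp⟩ := exists_two_least hcard p
  have ha' : a ∉ insert b t := by simp [ha, hab]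
  obtain rfl | ht := t.eq_empty_or_nonempty
  · obtain hs : p a + p b = 1 := by simpa [sum_pair hab] using hs
    have hbin := binEntropy_le_log_two (p := p a)
    rw [binEntropy_eq_negMulLog_add_negMulLog_one_sub] at hbin
    simp only [insert_empty_eq, sum_pair hab, orderEntropy_pair hab, hs, negMulLog_one]
    rw [show p b = 1 - p a by linarith, sub_sub_cancel]
    linarith
  · have hq : ∀ i ∈ t, Function.update p b (p a + p b) i = p i := fun i hi =>
      Function.update_of_ne (ne_of_mem_of_not_mem hi hb) _ _
    have hpa := hp a (by simp)
    have hpb := hp b (by simp)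
    refine sum_negMulLog_one_sub_insert_insert_le ht ha hb hab hpa hpb hap hbp hs hq
      (Function.update_self ..) (ih _ (ssubset_insert ha') _ ?_ ?_)
    · intro i hi
      obtain rfl | hi := mem_insert.1 hi
      · simpa using add_nonneg hpa hpb
      · simpa only [hq i hi] using hpa.trans (hap i hi)
    · rw [sum_insert ha', sum_insert hb] at hs
      rw [sum_insert hb, Function.update_self, sum_congr rfl hq]
      linarith

end OrderEntropy

section Matchings

variable {ι κ : Type*}

open Classical in
/-- The matchings, as sets of edges, of the complete bipartite graph with rows `R` and
columns `C`. -/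
def matchings (R : Finset ι) (C : Finset κ) : Finset (Finset (ι × κ)) :=
  {T ∈ (R ×ˢ C).powerset | Set.InjOn Prod.fst (T : Set (ι × κ)) ∧
    Set.InjOn Prod.snd (T : Set (ι × κ))}

lemma mem_matchings {R : Finset ι} {C : Finset κ} {T : Finset (ι × κ)} :
    T ∈ matchings R C ↔ T ⊆ R ×ˢ C ∧ Set.InjOn Prod.fst (T : Set (ι × κ)) ∧
      Set.InjOn Prod.snd (T : Set (ι × κ)) := by
  classical
  simp [matchings]

lemma empty_mem_matchings (R : Finset ι) (C : Finset κ) : ∅ ∈ matchings R C := by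
  simp [mem_matchings]

lemma fst_mem_of_mem_matchings {R : Finset ι} {C : Finset κ} {T : Finset (ι × κ)}
    (hT : T ∈ matchings R C) {e : ι × κ} (he : e ∈ T) : e.1 ∈ R :=
  (mem_product.1 ((mem_matchings.1 hT).1 he)).1

lemma snd_mem_of_mem_matchings {R : Finset ι} {C : Finset κ} {T : Finset (ι × κ)}
    (hT : T ∈ matchings R C) {e : ι × κ} (he : e ∈ T) : e.2 ∈ C :=
  (mem_product.1 ((mem_matchings.1 hT).1 he)).2

/-- The matchings covering all rows in `R` and all columns in `C`. -/
def perfectMatchings (R : Finset ι) (C : Finset κ) : Finset (Finset (ι × κ)) :=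
  {T ∈ matchings R C | #T = #R ∧ #T = #C}

lemma mem_perfectMatchings {R : Finset ι} {C : Finset κ} {T : Finset (ι × κ)} :
    T ∈ perfectMatchings R C ↔ T ∈ matchings R C ∧ #T = #R ∧ #T = #C := by
  simp [perfectMatchings]

lemma perfectMatchings_empty_left (C : Finset κ) :
    perfectMatchings (∅ : Finset ι) C ⊆ {∅} := fun T hT => by
  simpa using (mem_perfectMatchings.1 hT).2.1

lemma image_snd_of_mem_perfectMatchings [DecidableEq κ] {R : Finset ι} {C : Finset κ}
    {T : Finset (ι × κ)} (hT : T ∈ perfectMatchings R C) : T.image Prod.snd = C := by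
  obtain ⟨hT, -, hcard⟩ := mem_perfectMatchings.1 hT
  refine eq_of_subset_of_card_le (image_subset_iff.2 fun e => snd_mem_of_mem_matchings hT) ?_
  rw [card_image_of_injOn (mem_matchings.1 hT).2.2, hcard]

lemma image_fst_of_mem_perfectMatchings [DecidableEq ι] {R : Finset ι} {C : Finset κ}
    {T : Finset (ι × κ)} (hT : T ∈ perfectMatchings R C) : T.image Prod.fst = R := by
  obtain ⟨hT, hcard, -⟩ := mem_perfectMatchings.1 hT
  refine eq_of_subset_of_card_le (image_subset_iff.2 fun e => fst_mem_of_mem_matchings hT) ?_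
  rw [card_image_of_injOn (mem_matchings.1 hT).2.1, hcard]

variable [DecidableEq ι]

lemma notMem_of_mem_matchings_erase {R : Finset ι} {C : Finset κ} {i : ι} {j : κ}
    {T : Finset (ι × κ)} (hT : T ∈ matchings (R.erase i) C) : (i, j) ∉ T := fun h =>
  notMem_erase i R (fst_mem_of_mem_matchings hT h)

lemma filter_matchings_forall_fst_ne (R : Finset ι) (C : Finset κ) (i : ι) :
    {T ∈ matchings R C | ∀ e ∈ T, e.1 ≠ i} = matchings (R.erase i) C := by
  ext T
  simp only [mem_filter, mem_matchings]
  constructor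
  · rintro ⟨⟨hsub, hinj⟩, hne⟩
    refine ⟨fun e he => ?_, hinj⟩
    obtain ⟨h₁, h₂⟩ := mem_product.1 (hsub he)
    exact mem_product.2 ⟨mem_erase.2 ⟨hne e he, h₁⟩, h₂⟩
  · rintro ⟨hsub, hinj⟩
    exact ⟨⟨hsub.trans (product_subset_product_left (erase_subset _ _)), hinj⟩,
      fun e he => (mem_erase.1 (mem_product.1 (hsub he)).1).1⟩

variable [DecidableEq κ]

lemma swap_mem_matchings {R : Finset ι} {C : Finset κ} {T : Finset (ι × κ)}
    (hT : T ∈ matchings R C) : T.image Prod.swap ∈ matchings C R := by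
  obtain ⟨hsub, hfst, hsnd⟩ := mem_matchings.1 hT
  refine mem_matchings.2 ⟨?_, ?_, ?_⟩
  · rintro _ hswap
    obtain ⟨e, he, rfl⟩ := mem_image.1 hswap
    exact mem_product.2 (mem_product.1 (hsub he)).symm
  all_goals
    rw [coe_image]
    rintro _ ⟨e, he, rfl⟩ _ ⟨f, hf, rfl⟩ h
  · rw [hsnd he hf h]
  · rw [hfst he hf h]

lemma insert_mem_matchings {R : Finset ι} {C : Finset κ} {i : ι} {j : κ} (hi : i ∈ R)
    (hj : j ∈ C) {T : Finset (ι × κ)} (hT : T ∈ matchings (R.erase i) (C.erase j)) :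
    insert (i, j) T ∈ matchings R C := by
  obtain ⟨hsub, hfst, hsnd⟩ := mem_matchings.1 hT
  refine mem_matchings.2 ⟨insert_subset (mem_product.2 ⟨hi, hj⟩)
    (hsub.trans (product_subset_product (erase_subset _ _) (erase_subset _ _))), ?_, ?_⟩
  · rw [coe_insert, Set.injOn_insert (notMem_of_mem_matchings_erase hT)]
    exact ⟨hfst, fun ⟨_, he, h⟩ => ne_of_mem_erase (fst_mem_of_mem_matchings hT he) h⟩
  · rw [coe_insert, Set.injOn_insert (notMem_of_mem_matchings_erase hT)]
    exact ⟨hsnd, fun ⟨_, he, h⟩ => ne_of_mem_erase (snd_mem_of_mem_matchings hT he) h⟩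

lemma erase_mem_matchings {R : Finset ι} {C : Finset κ} {i : ι} {j : κ} {T : Finset (ι × κ)}
    (hT : T ∈ matchings R C) (h : (i, j) ∈ T) :
    T.erase (i, j) ∈ matchings (R.erase i) (C.erase j) := by
  obtain ⟨-, hfst, hsnd⟩ := mem_matchings.1 hT
  refine mem_matchings.2 ⟨fun e he => ?_, hfst.mono (erase_subset _ _),
    hsnd.mono (erase_subset _ _)⟩
  obtain ⟨hne, he⟩ := mem_erase.1 he
  refine mem_product.2 ⟨mem_erase.2 ⟨fun h' => hne (hfst he h h'), fst_mem_of_mem_matchings hT he⟩,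
    mem_erase.2 ⟨fun h' => hne (hsnd he h h'), snd_mem_of_mem_matchings hT he⟩⟩

lemma sum_matchings_filter_mem {A : Type*} [AddCommMonoid A] {R : Finset ι} {C : Finset κ} {i : ι}
    {j : κ} (hi : i ∈ R) (hj : j ∈ C) (F : Finset (ι × κ) → A) :
    ∑ T ∈ matchings R C with (i, j) ∈ T, F T =
      ∑ T ∈ matchings (R.erase i) (C.erase j), F (insert (i, j) T) := by
  refine sum_nbij' (·.erase (i, j)) (insert (i, j)) ?_ ?_ ?_ ?_ ?_
  · exact fun T hT => erase_mem_matchings (mem_filter.1 hT).1 (mem_filter.1 hT).2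
  · exact fun T hT => mem_filter.2 ⟨insert_mem_matchings hi hj hT, mem_insert_self _ _⟩
  · exact fun T hT => insert_erase (mem_filter.1 hT).2
  · exact fun T hT => erase_insert (notMem_of_mem_matchings_erase hT)
  · exact fun T hT => by rw [insert_erase (mem_filter.1 hT).2]

lemma sum_matchings_row {A : Type*} [AddCommMonoid A] {R : Finset ι} {i : ι} (hi : i ∈ R)
    (C : Finset κ) (F : Finset (ι × κ) → A) :
    ∑ T ∈ matchings R C, F T = ∑ T ∈ matchings (R.erase i) C, F T +
      ∑ j ∈ C, ∑ T ∈ matchings (R.erase i) (C.erase j), F (insert (i, j) T) := by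
  have hmatched : ∀ T ∈ matchings R C, (if ∀ e ∈ T, e.1 ≠ i then 0 else F T) =
      ∑ j ∈ C, if (i, j) ∈ T then F T else 0 := by
    intro T hT
    split_ifs with h
    · exact (sum_eq_zero fun j _ => if_neg fun hij => h _ hij rfl).symm
    · push Not at h
      obtain ⟨⟨i', j⟩, hj, rfl⟩ := h
      rw [sum_eq_single_of_mem j (snd_mem_of_mem_matchings hT hj), if_pos hj]
      refine fun j' _ hne => if_neg fun hj' => hne ?_
      have hedge : (i', j') = (i', j) := (mem_matchings.1 hT).2.1 hj' hj rfl
      exact congrArg Prod.snd hedge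
  rw [← sum_filter_add_sum_filter_not _ fun T => ∀ e ∈ T, e.1 ≠ i, filter_matchings_forall_fst_ne]
  congr 1
  rw [sum_filter]
  simp only [ite_not]
  rw [sum_congr rfl hmatched, sum_comm]
  refine sum_congr rfl fun j hj => ?_
  rw [← sum_filter, sum_matchings_filter_mem hi hj]

lemma sum_matchings_swap {A : Type*} [AddCommMonoid A] (R : Finset ι) (C : Finset κ)
    (F : Finset (ι × κ) → A) :
    ∑ T ∈ matchings R C, F T = ∑ T ∈ matchings C R, F (T.image Prod.swap) :=
  sum_nbij' (·.image Prod.swap) (·.image Prod.swap) (fun _ => swap_mem_matchings)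
    (fun _ => swap_mem_matchings) (fun T _ => by simp [image_image])
    (fun T _ => by simp [image_image]) (fun T _ => by simp [image_image])

lemma sum_perfectMatchings_filter_mem {A : Type*} [AddCommMonoid A] {R : Finset ι} {C : Finset κ}
    {i : ι} {j : κ} (hi : i ∈ R) (hj : j ∈ C) (F : Finset (ι × κ) → A) :
    ∑ T ∈ perfectMatchings R C with (i, j) ∈ T, F T =
      ∑ T ∈ perfectMatchings (R.erase i) (C.erase j), F (insert (i, j) T) := by
  simp only [perfectMatchings]
  rw [filter_comm, sum_filter, sum_matchings_filter_mem hi hj, sum_filter]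
  refine sum_congr rfl fun T hT => ?_
  rw [card_insert_of_notMem (notMem_of_mem_matchings_erase hT), ← card_erase_add_one hi,
    ← card_erase_add_one hj]
  simp only [add_left_inj]

lemma sum_perfectMatchings_sum_mem {A : Type*} [AddCommMonoid A] (R : Finset ι) (C : Finset κ)
    (F : Finset (ι × κ) → ι × κ → A) :
    ∑ T ∈ perfectMatchings R C, ∑ e ∈ T, F T e = ∑ i ∈ R, ∑ j ∈ C,
      ∑ T ∈ perfectMatchings (R.erase i) (C.erase j), F (insert (i, j) T) (i, j) := by
  rw [sum_comm' (t' := R ×ˢ C) (s' := fun e => {T ∈ perfectMatchings R C | e ∈ T}), sum_product]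
  · exact sum_congr rfl fun i hi => sum_congr rfl fun j hj =>
      sum_perfectMatchings_filter_mem hi hj _
  · intro T e
    simp only [mem_filter, mem_perfectMatchings, mem_matchings]
    exact ⟨fun h => ⟨⟨h.1, h.2⟩, h.1.1.1 h.2⟩, fun h => h.1⟩

/-- The graph of a permutation, as a perfect matching of rows with columns. -/
def permGraph [Fintype ι] (σ : Equiv.Perm ι) : Finset (ι × ι) := univ.image fun i => (i, σ i)

lemma mem_permGraph [Fintype ι] {σ : Equiv.Perm ι} {e : ι × ι} : e ∈ permGraph σ ↔ σ e.1 = e.2 := by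
  simp [permGraph, Prod.ext_iff]

lemma prod_permGraph [Fintype ι] {A : Type*} [CommMonoid A] (σ : Equiv.Perm ι) (f : ι × ι → A) :
    ∏ e ∈ permGraph σ, f e = ∏ i, f (i, σ i) :=
  prod_image fun _ _ _ _ h => congrArg Prod.fst h

lemma permGraph_mem_perfectMatchings [Fintype ι] (σ : Equiv.Perm ι) :
    permGraph σ ∈ perfectMatchings univ univ := by
  have hcard : #(permGraph σ) = #(univ : Finset ι) :=
    card_image_of_injective _ fun _ _ h => congrArg Prod.fst h
  refine mem_perfectMatchings.2 ⟨mem_matchings.2 ⟨by simp, ?_, ?_⟩, hcard, hcard⟩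
  all_goals
    intro e he f hf h
    rw [mem_coe, mem_permGraph] at he hf
  · exact Prod.ext h (by rw [← he, ← hf, h])
  · exact Prod.ext (σ.injective (by rw [he, hf, h])) h

lemma permGraph_injective [Fintype ι] : Function.Injective (permGraph (ι := ι)) := fun σ τ h =>
  Equiv.ext fun i => (mem_permGraph.1 (h ▸ mem_permGraph.2 rfl : (i, σ i) ∈ permGraph τ)).symm

lemma exists_permGraph_eq [Fintype ι] {T : Finset (ι × ι)} (hT : T ∈ perfectMatchings univ univ) :
    ∃ σ : Equiv.Perm ι, permGraph σ = T := by
  have hrow : ∀ i, ∃ j, (i, j) ∈ T := fun i => by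
    simpa [← image_fst_of_mem_perfectMatchings hT] using mem_univ i
  choose f hf using hrow
  obtain ⟨hT, hcard, -⟩ := mem_perfectMatchings.1 hT
  have hinj : Function.Injective f := fun i i' h =>
    congrArg Prod.fst ((mem_matchings.1 hT).2.2 (hf i) (hf i') h)
  refine ⟨Equiv.ofBijective f (Finite.injective_iff_bijective.1 hinj), ?_⟩
  refine eq_of_subset_of_card_le ?_ ?_
  · exact image_subset_iff.2 fun i _ => hf i
  · rw [hcard, permGraph, card_image_of_injective _ fun _ _ h => congrArg Prod.fst h]

lemma sum_perfectMatchings_univ [Fintype ι] {A : Type*} [AddCommMonoid A]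
    (F : Finset (ι × ι) → A) :
    ∑ T ∈ perfectMatchings univ univ, F T = ∑ σ : Equiv.Perm ι, F (permGraph σ) :=
  (sum_nbij permGraph (fun σ _ => permGraph_mem_perfectMatchings σ) permGraph_injective.injOn
    (fun T hT => by simpa using exists_permGraph_eq hT) fun _ _ => rfl).symm

end Matchings

section Sampling

variable {ι κ : Type*} [DecidableEq κ]

/-- The average, over all orderings of `s`, of the logarithm of the total weight of the elements
not preceding `j`. -/
def meanLogTail (s : Finset κ) (w : κ → ℝ) (j : κ) : ℝ :=
  ∑ S ∈ s.powerset with j ∈ S, orderWeight #s #S * log (∑ l ∈ S, w l)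

lemma card_mul_meanLogTail {s : Finset κ} {j : κ} (hj : j ∈ s) (w : κ → ℝ) :
    #s * meanLogTail s w j =
      log (∑ l ∈ s, w l) + ∑ l ∈ s.erase j, meanLogTail (s.erase l) w j := by
  have hs : 1 ≤ #s := card_pos.2 ⟨j, hj⟩
  have hswap : ∑ l ∈ s.erase j, meanLogTail (s.erase l) w j =
      ∑ S ∈ s.powerset with j ∈ S,
        ((#s - #S : ℕ) : ℝ) * (orderWeight (#s - 1) #S * log (∑ l ∈ S, w l)) := by
    have hcard : ∀ l ∈ s.erase j, meanLogTail (s.erase l) w j =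
        ∑ S ∈ (s.erase l).powerset with j ∈ S, orderWeight (#s - 1) #S * log (∑ i ∈ S, w i) :=
      fun l hl => by rw [meanLogTail, card_erase_of_mem (mem_of_mem_erase hl)]
    rw [sum_congr rfl hcard, sum_comm' (t' := {S ∈ s.powerset | j ∈ S}) (s' := fun S => s \ S)]
    · refine sum_congr rfl fun S hS => ?_
      rw [sum_const, card_sdiff_of_subset (mem_powerset.1 (mem_filter.1 hS).1), nsmul_eq_mul]
    · intro l S
      simp only [mem_erase, mem_filter, mem_powerset, mem_sdiff, subset_erase]
      grind
  have hweight : ∀ S ∈ s.powerset, #s * orderWeight #s #S =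
      (if S = s then 1 else 0) + ((#s - #S : ℕ) : ℝ) * orderWeight (#s - 1) #S := by
    intro S hS
    have hle := card_le_card (mem_powerset.1 hS)
    split_ifs with h
    · rw [h, orderWeight_self hs, Nat.sub_self, mul_inv_cancel₀ (by positivity)]
      simp
    · have hlt := card_lt_card ((mem_powerset.1 hS).ssubset_of_ne h)
      obtain ⟨m, hm⟩ := Nat.exists_eq_add_of_le' hs
      rw [hm, orderWeight_succ (by omega), Nat.cast_sub (by omega), Nat.add_sub_cancel]
      push_cast
      field_simp
      ring
  rw [hswap, meanLogTail, mul_sum]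
  simp only [← mul_assoc]
  rw [sum_congr rfl fun S hS => by rw [hweight S (mem_filter.1 hS).1, add_mul, ite_mul, one_mul,
    zero_mul], sum_add_distrib, sum_ite_eq', if_pos (by simp [hj])]

lemma sum_mul_meanLogTail (s : Finset κ) (p : κ → ℝ) :
    ∑ j ∈ s, p j * meanLogTail s p j = -orderEntropy s p := by
  simp only [meanLogTail, orderEntropy, mul_sum]
  rw [sum_comm' (t' := s.powerset) (s' := fun S => S), ← sum_neg_distrib]
  · refine sum_congr rfl fun S _ => ?_
    rw [← sum_mul, negMulLog]
    ring
  · intro j S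
    simp only [mem_filter, mem_powerset]
    exact ⟨fun h => ⟨h.2.2, h.2.1⟩, fun h => ⟨h.2 h.1, h.2, h.1⟩⟩

/-- The factor of the edge `e` in the geometric mean, over all orderings of `C`, of the
probabilities of a matching under sequential sampling: each row picks a not yet used column with
probability proportional to `w`. -/
def samplingWeight (w : ι → κ → ℝ) (C : Finset κ) (e : ι × κ) : ℝ :=
  w e.1 e.2 * exp (-meanLogTail C (w e.1) e.2)

lemma samplingWeight_nonneg {w : ι → κ → ℝ} (hw : ∀ i j, 0 ≤ w i j) (C : Finset κ) (e : ι × κ) :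
    0 ≤ samplingWeight w C e := mul_nonneg (hw _ _) (exp_nonneg _)

lemma card_mul_sum_meanLogTail [DecidableEq ι] {R : Finset ι} {C : Finset κ} {T : Finset (ι × κ)}
    (hT : T ∈ perfectMatchings R C) (w : ι → κ → ℝ) :
    #T * ∑ e ∈ T, meanLogTail C (w e.1) e.2 = ∑ f ∈ T, (log (∑ j ∈ C, w f.1 j) +
      ∑ e ∈ T.erase f, meanLogTail (C.erase f.2) (w e.1) e.2) := by
  obtain ⟨hmatch, -, hcard⟩ := mem_perfectMatchings.1 hT
  have hinj := (mem_matchings.1 hmatch).2.2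
  have hcols : ∀ e ∈ T, ∑ l ∈ C.erase e.2, meanLogTail (C.erase l) (w e.1) e.2 =
      ∑ f ∈ T.erase e, meanLogTail (C.erase f.2) (w e.1) e.2 := by
    intro e he
    have himage : (T.erase e).image Prod.snd = C.erase e.2 := by
      rw [← image_snd_of_mem_perfectMatchings hT]
      ext j
      simp only [mem_image, mem_erase]
      constructor
      · rintro ⟨f, ⟨hne, hf⟩, rfl⟩
        exact ⟨fun h => hne (hinj hf he h), f, hf, rfl⟩
      · rintro ⟨hne, f, hf, rfl⟩
        exact ⟨f, ⟨fun h => hne (h ▸ rfl), hf⟩, rfl⟩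
    rw [← himage, sum_image (hinj.mono (erase_subset _ _))]
  rw [mul_sum, sum_add_distrib, sum_comm' (t' := T) (s' := fun e => T.erase e),
    ← sum_add_distrib]
  · refine sum_congr rfl fun e he => ?_
    rw [hcard, card_mul_meanLogTail (snd_mem_of_mem_matchings hmatch he), hcols e he]
  · grind

lemma prod_samplingWeight_le [DecidableEq ι] {R : Finset ι} {C : Finset κ}
    {T : Finset (ι × κ)} (hT : T ∈ perfectMatchings R C) (hne : T.Nonempty) {w : ι → κ → ℝ}
    (hw : ∀ i j, 0 ≤ w i j) :
    ∏ e ∈ T, samplingWeight w C e ≤ ∑ f ∈ T, (#T : ℝ)⁻¹ *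
      (w f.1 f.2 * exp (-log (∑ j ∈ C, w f.1 j)) *
        ∏ e ∈ T.erase f, samplingWeight w (C.erase f.2) e) := by
  have hcard : (#T : ℝ) ≠ 0 := mod_cast (card_pos.2 hne).ne'
  have hmean : ∑ e ∈ T, -meanLogTail C (w e.1) e.2 = ∑ f ∈ T, (#T : ℝ)⁻¹ •
      (-log (∑ j ∈ C, w f.1 j) + ∑ e ∈ T.erase f, -meanLogTail (C.erase f.2) (w e.1) e.2) := by
    rw [← smul_sum, smul_eq_mul, eq_inv_mul_iff_mul_eq₀ hcard]
    simp only [sum_neg_distrib, ← neg_add, mul_neg, card_mul_sum_meanLogTail hT]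
  have hjensen := convexOn_exp.map_sum_le (t := T) (w := fun _ => (#T : ℝ)⁻¹)
    (p := fun f => -log (∑ j ∈ C, w f.1 j) +
      ∑ e ∈ T.erase f, -meanLogTail (C.erase f.2) (w e.1) e.2)
    (fun _ _ => by positivity) (by simp [hcard]) (fun _ _ => Set.mem_univ _)
  simp only [samplingWeight, prod_mul_distrib, ← exp_sum]
  rw [hmean]
  refine (mul_le_mul_of_nonneg_left hjensen (prod_nonneg fun e _ => hw _ _)).trans_eq ?_
  rw [mul_sum]
  refine sum_congr rfl fun f hf => ?_
  rw [← mul_prod_erase _ _ hf, exp_add, smul_eq_mul]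
  ring

lemma mul_exp_neg_log_le_one {x : ℝ} (hx : 0 ≤ x) : x * exp (-log x) ≤ 1 := by
  obtain rfl | hx := hx.eq_or_lt
  · simp
  · rw [exp_neg, exp_log hx, mul_inv_cancel₀ hx.ne']

theorem sum_prod_samplingWeight_le_one {w : ι → κ → ℝ} (hw : ∀ i j, 0 ≤ w i j) (R : Finset ι)
    (C : Finset κ) : ∑ T ∈ perfectMatchings R C, ∏ e ∈ T, samplingWeight w C e ≤ 1 := by
  classical
  induction hm : #R generalizing R C with
  | zero =>
    rw [card_eq_zero.1 hm]
    refine (sum_le_sum_of_subset_of_nonneg (perfectMatchings_empty_left C) fun T _ _ =>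
      prod_nonneg fun e _ => samplingWeight_nonneg hw C e).trans ?_
    simp
  | succ m ih =>
  have hedge : ∀ i ∈ R, ∀ j ∈ C, ∑ T ∈ perfectMatchings (R.erase i) (C.erase j), (#R : ℝ)⁻¹ *
      (w i j * exp (-log (∑ j ∈ C, w i j)) * ∏ e ∈ T, samplingWeight w (C.erase j) e) ≤
        (#R : ℝ)⁻¹ * (w i j * exp (-log (∑ j ∈ C, w i j))) := by
    intro i hi j _
    simp only [← mul_sum]
    refine mul_le_mul_of_nonneg_left
      (mul_le_of_le_one_right (mul_nonneg (hw i j) (exp_nonneg _)) (ih _ _ ?_)) (by positivity)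
    rw [card_erase_of_mem hi, hm, Nat.add_sub_cancel]
  calc ∑ T ∈ perfectMatchings R C, ∏ e ∈ T, samplingWeight w C e
      ≤ ∑ T ∈ perfectMatchings R C, ∑ f ∈ T, (#R : ℝ)⁻¹ *
        (w f.1 f.2 * exp (-log (∑ j ∈ C, w f.1 j)) *
          ∏ e ∈ T.erase f, samplingWeight w (C.erase f.2) e) := by
        refine sum_le_sum fun T hT => ?_
        have hTR := (mem_perfectMatchings.1 hT).2.1
        rw [← hTR]
        exact prod_samplingWeight_le hT (card_pos.1 (by omega)) hw
    _ = ∑ i ∈ R, ∑ j ∈ C, ∑ T ∈ perfectMatchings (R.erase i) (C.erase j), (#R : ℝ)⁻¹ *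
        (w i j * exp (-log (∑ j ∈ C, w i j)) * ∏ e ∈ T, samplingWeight w (C.erase j) e) := by
        rw [sum_perfectMatchings_sum_mem]
        refine sum_congr rfl fun i _ => sum_congr rfl fun j _ => sum_congr rfl fun T hT => ?_
        rw [erase_insert (notMem_of_mem_matchings_erase (mem_perfectMatchings.1 hT).1)]
    _ ≤ ∑ i ∈ R, ∑ j ∈ C, (#R : ℝ)⁻¹ * (w i j * exp (-log (∑ j ∈ C, w i j))) :=
        sum_le_sum fun i hi => sum_le_sum fun j hj => hedge i hi j hj
    _ ≤ ∑ _i ∈ R, (#R : ℝ)⁻¹ * 1 := by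
        refine sum_le_sum fun i _ => ?_
        rw [← mul_sum, ← sum_mul]
        gcongr
        exact mul_exp_neg_log_le_one (sum_nonneg fun j _ => hw i j)
    _ = 1 := by
        rw [sum_const, mul_one, nsmul_eq_mul, hm, mul_inv_cancel₀ (by positivity)]

lemma sum_perm_prod_samplingWeight_le_one [Fintype κ] {w : κ → κ → ℝ} (hw : ∀ i j, 0 ≤ w i j) :
    ∑ σ : Equiv.Perm κ, ∏ i, samplingWeight w univ (i, σ i) ≤ 1 := by
  simpa only [sum_perfectMatchings_univ, prod_permGraph] using
    sum_prod_samplingWeight_le_one hw (univ : Finset κ) univ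

end Sampling

section Entropy

lemma sum_negMulLog_le_neg_sum_mul_log {Ω : Type*} {s : Finset Ω} {p q : Ω → ℝ}
    (hp : ∀ ω ∈ s, 0 ≤ p ω) (hq : ∀ ω ∈ s, 0 ≤ q ω) (hpq : ∀ ω ∈ s, 0 < p ω → 0 < q ω)
    (hsum : ∑ ω ∈ s, q ω ≤ ∑ ω ∈ s, p ω) :
    ∑ ω ∈ s, negMulLog (p ω) ≤ -∑ ω ∈ s, p ω * log (q ω) := by
  have hterm : ∀ ω ∈ s, negMulLog (p ω) + p ω * log (q ω) ≤ q ω - p ω := by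
    intro ω hω
    obtain h | h := (hp ω hω).eq_or_lt
    · simpa [← h] using hq ω hω
    · have hlog := log_le_sub_one_of_pos (div_pos (hpq ω hω h) h)
      rw [log_div (hpq ω hω h).ne' h.ne'] at hlog
      have := mul_le_mul_of_nonneg_left hlog h.le
      rw [mul_sub _ (q ω / _), mul_div_cancel₀ _ h.ne'] at this
      rw [negMulLog]
      linarith
  have := sum_le_sum hterm
  rw [sum_add_distrib, sum_sub_distrib] at this
  linarith

variable {ι : Type*} [Fintype ι] [DecidableEq ι]

/-- The marginals of a distribution `μ` on permutations: `marginal μ i j` is the mass of the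
permutations sending `i` to `j`. -/
def marginal (μ : Equiv.Perm ι → ℝ) (i j : ι) : ℝ := ∑ σ with σ i = j, μ σ

lemma sum_marginal_mul (μ : Equiv.Perm ι → ℝ) (i : ι) (g : ι → ℝ) :
    ∑ j, marginal μ i j * g j = ∑ σ, μ σ * g (σ i) := by
  simp only [marginal, sum_mul]
  rw [← sum_fiberwise univ fun σ : Equiv.Perm ι => σ i]
  refine sum_congr rfl fun j _ => sum_congr rfl fun σ hσ => ?_
  rw [(mem_filter.1 hσ).2]

/-- The Bethe entropy of a matrix of marginals, for the permanent. -/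
def betheEntropy (γ : ι → ι → ℝ) : ℝ := ∑ i, ∑ j, (negMulLog (γ i j) - negMulLog (1 - γ i j))

-- Gibbs' inequality against the geometric mean of the sequential-sampling distributions.
theorem sum_negMulLog_le_betheEntropy {μ : Equiv.Perm ι → ℝ} (hμ : ∀ σ, 0 ≤ μ σ)
    (hsum : ∑ σ, μ σ = 1) :
    ∑ σ, negMulLog (μ σ) ≤ betheEntropy (marginal μ) + Fintype.card ι * (log 2 / 2) := by
  set γ := marginal μ
  have hγ : ∀ i j, 0 ≤ γ i j := fun i j => sum_nonneg fun σ _ => hμ σ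
  have hrow : ∀ i, ∑ j, γ i j = 1 := fun i => by simpa [hsum] using sum_marginal_mul μ i 1
  have hpos : ∀ σ, 0 < μ σ → ∀ i, 0 < γ i (σ i) := fun σ h i =>
    h.trans_le (single_le_sum (fun τ _ => hμ τ) (by simp))
  have hlog : ∀ σ, μ σ * log (∏ i, samplingWeight γ univ (i, σ i)) =
      μ σ * ∑ i, (log (γ i (σ i)) - meanLogTail univ (γ i) (σ i)) := by
    intro σ
    obtain h | h := (hμ σ).eq_or_lt
    · rw [← h, zero_mul, zero_mul]
    · rw [log_prod (f := fun i => samplingWeight γ univ (i, σ i))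
        fun i _ => (mul_pos (hpos σ h i) (exp_pos _)).ne']
      congr 1
      refine sum_congr rfl fun i _ => ?_
      rw [samplingWeight, log_mul (hpos σ h i).ne' (exp_pos _).ne', log_exp, ← sub_eq_add_neg]
  calc ∑ σ, negMulLog (μ σ)
      ≤ -∑ σ, μ σ * log (∏ i, samplingWeight γ univ (i, σ i)) :=
        sum_negMulLog_le_neg_sum_mul_log (fun σ _ => hμ σ)
          (fun σ _ => prod_nonneg fun i _ => samplingWeight_nonneg hγ _ _)
          (fun σ _ h => prod_pos fun i _ => mul_pos (hpos σ h i) (exp_pos _))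
          (by rw [hsum]; exact sum_perm_prod_samplingWeight_le_one hγ)
    _ = ∑ i, (∑ j, negMulLog (γ i j) - orderEntropy univ (γ i)) := by
        simp only [hlog, mul_sum]
        rw [sum_comm, ← sum_neg_distrib]
        refine sum_congr rfl fun i _ => ?_
        rw [← sum_marginal_mul μ i fun j => log (γ i j) - meanLogTail univ (γ i) j]
        simp only [mul_sub, sum_sub_distrib, negMulLog, neg_mul, sum_neg_distrib]
        linarith [sum_mul_meanLogTail univ (γ i)]
    _ ≤ ∑ i, (∑ j, (negMulLog (γ i j) - negMulLog (1 - γ i j)) + log 2 / 2) := by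
        refine sum_le_sum fun i _ => ?_
        rw [sum_sub_distrib]
        linarith [sum_negMulLog_one_sub_le univ (γ i) (fun j _ => hγ i j) (hrow i)]
    _ = betheEntropy γ + Fintype.card ι * (log 2 / 2) := by
        rw [sum_add_distrib, betheEntropy, sum_const, card_univ, nsmul_eq_mul]

end Entropy

section MatchingSum

variable {ι κ : Type*} [DecidableEq ι] [DecidableEq κ]

/-- The monomer–dimer partition function of the complete bipartite graph with rows `R` and
columns `C`: dimers have weights `w`, monomers have weights `Y` on rows and `Z` on columns. -/
def matchingSum (w : ι → κ → ℝ) (Y : ι → ℝ) (Z : κ → ℝ) (R : Finset ι) (C : Finset κ) : ℝ :=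
  ∑ T ∈ matchings R C, (∏ e ∈ T, w e.1 e.2) *
    ((∏ i ∈ R \ T.image Prod.fst, Y i) * ∏ j ∈ C \ T.image Prod.snd, Z j)

variable {w w' : ι → κ → ℝ} {Y Y' : ι → ℝ} {Z Z' : κ → ℝ} {R : Finset ι} {C : Finset κ}
  {i : ι} {j l : κ}

lemma matchingSum_nonneg (hw : ∀ i j, 0 ≤ w i j) (hY : ∀ i, 0 ≤ Y i) (hZ : ∀ j, 0 ≤ Z j)
    (R : Finset ι) (C : Finset κ) : 0 ≤ matchingSum w Y Z R C :=
  sum_nonneg fun _ _ => mul_nonneg (prod_nonneg fun _ _ => hw _ _)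
    (mul_nonneg (prod_nonneg fun _ _ => hY _) (prod_nonneg fun _ _ => hZ _))

lemma matchingSum_congr (hw : ∀ i ∈ R, w i = w' i) (hY : ∀ i ∈ R, Y i = Y' i) :
    matchingSum w Y Z R C = matchingSum w' Y' Z R C :=
  sum_congr rfl fun T hT => by
    rw [prod_congr rfl fun e he => by rw [hw e.1 (fst_mem_of_mem_matchings hT he)],
      prod_congr (f := Y) rfl fun i hi => hY i (mem_sdiff.1 hi).1]

lemma matchingSum_swap (w : ι → κ → ℝ) (Y : ι → ℝ) (Z : κ → ℝ) (R : Finset ι) (C : Finset κ) :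
    matchingSum w Y Z R C = matchingSum (fun j i => w i j) Z Y C R := by
  rw [matchingSum, sum_matchings_swap]
  refine sum_congr rfl fun T _ => ?_
  rw [prod_image Prod.swap_injective.injOn, image_image, image_image, mul_comm (∏ i ∈ _, Y i)]
  rfl

lemma matchingSum_row (hi : i ∈ R) :
    matchingSum w Y Z R C = Y i * matchingSum w Y Z (R.erase i) C +
      ∑ j ∈ C, w i j * matchingSum w Y Z (R.erase i) (C.erase j) := by
  rw [matchingSum, sum_matchings_row hi, matchingSum, mul_sum]
  congr 1
  · refine sum_congr rfl fun T hT => ?_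
    have hi' : i ∈ R \ T.image Prod.fst := mem_sdiff.2 ⟨hi, fun h => by
      obtain ⟨e, he, rfl⟩ := mem_image.1 h
      exact notMem_erase _ _ (fst_mem_of_mem_matchings hT he)⟩
    rw [← mul_prod_erase _ _ hi', erase_sdiff_comm]
    ring
  · refine sum_congr rfl fun j _ => ?_
    rw [matchingSum, mul_sum]
    refine sum_congr rfl fun T hT => ?_
    rw [prod_insert (notMem_of_mem_matchings_erase hT), image_insert, image_insert, sdiff_insert,
      sdiff_insert, erase_sdiff_comm, erase_sdiff_comm, mul_assoc]

lemma matchingSum_column (hj : j ∈ C) :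
    matchingSum w Y Z R C = Z j * matchingSum w Y Z R (C.erase j) +
      ∑ i ∈ R, w i j * matchingSum w Y Z (R.erase i) (C.erase j) := by
  simp only [matchingSum_swap w Y Z, matchingSum_row hj]

lemma matchingSum_mul_erase_le_of_erase (hw : ∀ i j, 0 ≤ w i j) (hi : i ∈ R) (hj : j ∈ C)
    (h : ∀ l ∈ C.erase j,
      matchingSum w Y Z (R.erase i) C * matchingSum w Y Z (R.erase i) ((C.erase j).erase l) ≤
        matchingSum w Y Z (R.erase i) (C.erase j) * matchingSum w Y Z (R.erase i) (C.erase l)) :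
    matchingSum w Y Z (R.erase i) C * matchingSum w Y Z R (C.erase j) ≤
      matchingSum w Y Z R C * matchingSum w Y Z (R.erase i) (C.erase j) := by
  rw [matchingSum_row (C := C) hi, matchingSum_row (C := C.erase j) hi, ← add_sum_erase _ _ hj]
  have hle : (∑ l ∈ C.erase j, w i l * matchingSum w Y Z (R.erase i) ((C.erase j).erase l)) *
        matchingSum w Y Z (R.erase i) C ≤
      (∑ l ∈ C.erase j, w i l * matchingSum w Y Z (R.erase i) (C.erase l)) *
        matchingSum w Y Z (R.erase i) (C.erase j) := by
    rw [sum_mul, sum_mul]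
    refine sum_le_sum fun l hl => ?_
    linarith [mul_le_mul_of_nonneg_left (h l hl) (hw i l)]
  linarith [mul_nonneg (hw i j) (mul_self_nonneg (matchingSum w Y Z (R.erase i) (C.erase j)))]

-- The vacancies of two columns are negatively correlated.
lemma matchingSum_mul_erase_erase_le (hw : ∀ i j, 0 ≤ w i j) (hj : j ∈ C) (hl : l ∈ C.erase j) :
    matchingSum w Y Z R C * matchingSum w Y Z R ((C.erase j).erase l) ≤
      matchingSum w Y Z R (C.erase j) * matchingSum w Y Z R (C.erase l) := by
  induction R using Finset.strongInduction generalizing C j l with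
  | H R ih =>
    have hj' : j ∈ C.erase l := mem_erase.2 ⟨(ne_of_mem_erase hl).symm, hj⟩
    have hcol : (∑ i ∈ R, w i j * matchingSum w Y Z (R.erase i) (C.erase j)) *
          matchingSum w Y Z R ((C.erase j).erase l) ≤
        (∑ i ∈ R, w i j * matchingSum w Y Z (R.erase i) ((C.erase j).erase l)) *
          matchingSum w Y Z R (C.erase j) := by
      rw [sum_mul, sum_mul]
      refine sum_le_sum fun i hi => ?_
      linarith [mul_le_mul_of_nonneg_left (matchingSum_mul_erase_le_of_erase (Y := Y) (Z := Z) hw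
        hi hl fun m hm => ih _ (erase_ssubset hi) hl hm) (hw i j)]
    rw [matchingSum_column (C := C) hj, matchingSum_column (C := C.erase l) hj',
      erase_right_comm (a := l)]
    linarith

lemma matchingSum_mul_erase_le (hw : ∀ i j, 0 ≤ w i j) (hi : i ∈ R) (hj : j ∈ C) :
    matchingSum w Y Z (R.erase i) C * matchingSum w Y Z R (C.erase j) ≤
      matchingSum w Y Z R C * matchingSum w Y Z (R.erase i) (C.erase j) :=
  matchingSum_mul_erase_le_of_erase hw hi hj fun _ hl => matchingSum_mul_erase_erase_le hw hj hl

lemma matchingSum_update_row_add (hi : i ∈ R) (t : ℝ) :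
    matchingSum w (Function.update Y i (Y i + t)) Z R C =
      matchingSum w Y Z R C + t * matchingSum w Y Z (R.erase i) C := by
  have hcongr : ∀ C, matchingSum w (Function.update Y i (Y i + t)) Z (R.erase i) C =
      matchingSum w Y Z (R.erase i) C := fun C =>
    matchingSum_congr (fun _ _ => rfl) fun l hl => Function.update_of_ne (ne_of_mem_erase hl) _ _
  simp only [matchingSum_row hi, hcongr, Function.update_self]
  ring

lemma matchingSum_update_column_add (hj : j ∈ C) (t : ℝ) :
    matchingSum w Y (Function.update Z j (Z j + t)) R C =
      matchingSum w Y Z R C + t * matchingSum w Y Z R (C.erase j) := by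
  simp only [matchingSum_swap w Y, matchingSum_update_row_add hj]

lemma matchingSum_update_dimer_add (hi : i ∈ R) (hj : j ∈ C) (a : ℝ) :
    matchingSum (Function.update w i (Function.update (w i) j (w i j + a))) Y Z R C =
      matchingSum w Y Z R C + a * matchingSum w Y Z (R.erase i) (C.erase j) := by
  set w' := Function.update w i (Function.update (w i) j (w i j + a)) with hw'
  have hcongr : ∀ C, matchingSum w' Y Z (R.erase i) C = matchingSum w Y Z (R.erase i) C := fun C =>
    matchingSum_congr (fun l hl => Function.update_of_ne (ne_of_mem_erase hl) _ _) fun _ _ => rfl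
  have hrow : ∀ l ∈ C.erase j, w' i l = w i l := fun l hl => by
    rw [hw', Function.update_self, Function.update_of_ne (ne_of_mem_erase hl)]
  simp only [matchingSum_row hi, hcongr]
  rw [← add_sum_erase _ _ hj, ← add_sum_erase _ _ hj,
    sum_congr rfl fun l hl => by rw [hrow l hl], hw', Function.update_self, Function.update_self]
  ring

lemma matchingSum_zero_dimer (Y : ι → ℝ) (Z : κ → ℝ) (R : Finset ι) (C : Finset κ) :
    matchingSum 0 Y Z R C = (∏ i ∈ R, Y i) * ∏ j ∈ C, Z j := by
  rw [matchingSum, sum_eq_single_of_mem ∅ (empty_mem_matchings R C)]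
  · simp
  · intro T _ hT
    obtain ⟨e, he⟩ := nonempty_iff_ne_empty.2 hT
    rw [prod_eq_zero he rfl, zero_mul]

lemma matchingSum_zero_monomer (w : ι → κ → ℝ) (R : Finset ι) (C : Finset κ) :
    matchingSum w 0 0 R C = ∑ T ∈ perfectMatchings R C, ∏ e ∈ T, w e.1 e.2 := by
  rw [matchingSum, perfectMatchings, sum_filter]
  refine sum_congr rfl fun T hT => ?_
  obtain ⟨-, hfst, hsnd⟩ := mem_matchings.1 hT
  have hR : T.image Prod.fst ⊆ R := image_subset_iff.2 fun _ => fst_mem_of_mem_matchings hT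
  have hC : T.image Prod.snd ⊆ C := image_subset_iff.2 fun _ => snd_mem_of_mem_matchings hT
  have hcardR := card_le_card hR
  have hcardC := card_le_card hC
  simp only [Pi.zero_apply, prod_const, card_sdiff_of_subset hR, card_sdiff_of_subset hC,
    card_image_of_injOn hfst, card_image_of_injOn hsnd] at hcardR hcardC ⊢
  split_ifs with h
  · simp [← h.1, ← h.2]
  · obtain hne | hne : #R - #T ≠ 0 ∨ #C - #T ≠ 0 := by omega
    · rw [zero_pow hne, zero_mul, mul_zero]
    · rw [zero_pow hne, mul_zero, mul_zero]

lemma permanent_of_eq_sum [Fintype ι] (w : ι → ι → ℝ) :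
    (Matrix.of w).permanent = ∑ σ : Equiv.Perm ι, ∏ i, w i (σ i) := by
  rw [← Matrix.permanent_transpose]
  rfl

lemma matchingSum_zero_monomer_univ [Fintype ι] (w : ι → ι → ℝ) :
    matchingSum w 0 0 univ univ = (Matrix.of w).permanent := by
  simp only [matchingSum_zero_monomer, sum_perfectMatchings_univ, prod_permGraph,
    permanent_of_eq_sum]

end MatchingSum

section Residual

/-- The number `1 - x`, with the value at `x = 1` replaced by `1`, so that it stays positive on
`x ≤ 1` and its logarithm agrees with that of `1 - x`. -/
def residual (x : ℝ) : ℝ := if x = 1 then 1 else 1 - x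

@[simp] lemma residual_one : residual 1 = 1 := if_pos rfl

lemma residual_of_ne {x : ℝ} (hx : x ≠ 1) : residual x = 1 - x := if_neg hx

lemma residual_pos {x : ℝ} (hx : x ≤ 1) : 0 < residual x := by
  obtain rfl | hx := hx.eq_or_lt
  · rw [residual_one]
    exact one_pos
  · rw [residual_of_ne hx.ne]
    exact sub_pos.2 hx

lemma log_residual (x : ℝ) : log (residual x) = log (1 - x) := by
  obtain rfl | hx := eq_or_ne x 1
  · simp
  · rw [residual_of_ne hx]

variable {A B C E K α : ℝ}

-- The hypothesis is used at `y = C / W`, `z = X / C`, which for `B * C = A * E` minimizes the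
-- right-hand side divided by `(y * z) ^ α`.
lemma mul_one_sub_le_of_bilinear_of_pos (hA : 0 < A) (hC : 0 < C) (hE : 0 < E) (hα₀ : 0 ≤ α)
    (hα₁ : α < 1) (hdet : B * C ≤ A * E)
    (h : ∀ y z : ℝ, 0 < y → 0 < z →
      K * (y * z) ^ α ≤ A + α * y * B + α * z * C + α ^ 2 * (y * z) * E) :
    K * (1 - α) ≤ A + α * (1 - α) * E := by
  have hr : 0 < 1 - α := sub_pos.2 hα₁
  obtain ⟨X, hX, rfl⟩ : ∃ X, 0 < X ∧ A = (1 - α) * X :=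
    ⟨A / (1 - α), by positivity, by field_simp⟩
  obtain ⟨W, hW, hWE⟩ : ∃ W, 0 < W ∧ W = (1 - α) * E := ⟨_, by positivity, rfl⟩
  have hyz : C / W * (X / C) = X / W := by field_simp
  have hyB : C / W * B ≤ X := by
    rw [div_mul_eq_mul_div, div_le_iff₀ hW, hWE]
    linarith
  have hyzE : X / W * ((1 - α) * E) = X := by rw [← hWE, div_mul_cancel₀ _ hW.ne']
  have hmin := h (C / W) (X / C) (by positivity) (by positivity)
  rw [hyz, mul_assoc α (X / C), div_mul_cancel₀ _ hC.ne', mul_assoc α (C / W)] at hmin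
  have hbound : K * (1 - α) * (X / W) ^ α ≤ X := by
    nlinarith [mul_le_mul_of_nonneg_left hyB hα₀, mul_le_mul_of_nonneg_left hmin hr.le]
  have hamgm : X ^ (1 - α) * W ^ α ≤ (1 - α) * X + α * W :=
    geom_mean_le_arith_mean2_weighted hr.le hα₀ hX.le hW.le (by ring)
  calc K * (1 - α) ≤ X / (X / W) ^ α := (le_div_iff₀ (by positivity)).2 hbound
    _ = X ^ (1 - α) * W ^ α := by
        rw [rpow_sub hX, rpow_one, div_rpow hX.le hW.le]
        field_simp
    _ ≤ (1 - α) * X + α * (1 - α) * E := by rw [mul_assoc, ← hWE]; exact hamgm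

lemma mul_one_sub_le_of_bilinear (hA : 0 ≤ A) (hB : 0 ≤ B) (hC : 0 ≤ C) (hE : 0 ≤ E)
    (hα₀ : 0 ≤ α) (hα₁ : α < 1) (hdet : B * C ≤ A * E)
    (h : ∀ y z : ℝ, 0 < y → 0 < z →
      K * (y * z) ^ α ≤ A + α * y * B + α * z * C + α ^ 2 * (y * z) * E) :
    K * (1 - α) ≤ A + α * (1 - α) * E := by
  refine le_of_forall_pos_le_add fun ε hε => ?_
  obtain ⟨δ, hδ, hBδ⟩ : ∃ δ > 0, B * δ ≤ (ε / 2) ^ 2 := by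
    refine ⟨(ε / 2) ^ 2 / (B + 1), by positivity, ?_⟩
    rw [mul_div_assoc', div_le_iff₀ (by positivity)]
    linarith [sq_nonneg (ε / 2)]
  have hpert : K * (1 - α) ≤ A + ε / 2 + α * (1 - α) * (E + ε / 2) :=
    mul_one_sub_le_of_bilinear_of_pos (B := B) (C := C + δ) (by positivity) (by positivity)
      (by positivity) hα₀ hα₁ (by nlinarith) fun y z hy hz =>
        (h y z hy hz).trans (by gcongr <;> linarith)
  nlinarith [mul_nonneg hα₀ (sub_nonneg.2 hα₁.le), sq_nonneg α]

lemma le_of_bilinear_one (hA : 0 ≤ A) (hB : 0 ≤ B) (hC : 0 ≤ C)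
    (h : ∀ y z : ℝ, 0 < y → 0 < z → K * (y * z) ≤ A + y * B + z * C + y * z * E) : K ≤ E := by
  refine le_of_forall_pos_le_add fun ε hε => ?_
  set t := 1 + (A + B + C) / ε with ht
  have ht₁ : 1 ≤ t := le_add_of_nonneg_right (by positivity)
  have htε : A + B + C ≤ ε * t := by
    rw [ht, mul_add, mul_div_cancel₀ _ hε.ne']
    linarith
  have htt := h t t (by positivity) (by positivity)
  have : (K - E) * t ≤ ε * t := by
    nlinarith
  linarith [le_of_mul_le_mul_right this (by positivity)]

lemma mul_residual_le_of_bilinear (hA : 0 ≤ A) (hB : 0 ≤ B) (hC : 0 ≤ C) (hE : 0 ≤ E)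
    (hα₀ : 0 ≤ α) (hα₁ : α ≤ 1) (hdet : B * C ≤ A * E)
    (h : ∀ y z : ℝ, 0 < y → 0 < z →
      K * (y * z) ^ α ≤ A + α * y * B + α * z * C + α ^ 2 * (y * z) * E) :
    K * residual α ≤ A + α * residual α * E := by
  obtain rfl | hα₁ := hα₁.eq_or_lt
  · have hKE : K ≤ E := le_of_bilinear_one hA hB hC (by simpa using h)
    rw [residual_one]
    linarith
  · rw [residual_of_ne hα₁.ne]
    exact mul_one_sub_le_of_bilinear hA hB hC hE hα₀ hα₁ hdet h

end Residual

section Permanent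

variable {ι : Type*} [DecidableEq ι]

/-- The dimer weights `α * residual α` on the edges in `T`, and zero elsewhere. -/
def dimerWeight (α : ι → ι → ℝ) (T : Finset (ι × ι)) (i j : ι) : ℝ :=
  if (i, j) ∈ T then α i j * residual (α i j) else 0

lemma dimerWeight_empty (α : ι → ι → ℝ) : dimerWeight α ∅ = 0 := by
  ext
  simp [dimerWeight]

variable {α : ι → ι → ℝ} {T : Finset (ι × ι)} {i j : ι}

lemma dimerWeight_nonneg (hα : ∀ i j, 0 ≤ α i j) (hα₁ : ∀ i j, α i j ≤ 1) (i j : ι) :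
    0 ≤ dimerWeight α T i j := by
  rw [dimerWeight]
  split_ifs
  · exact mul_nonneg (hα i j) (residual_pos (hα₁ i j)).le
  · exact le_rfl

lemma dimerWeight_insert (h : (i, j) ∉ T) : dimerWeight α (insert (i, j) T) =
    Function.update (dimerWeight α T) i (Function.update (dimerWeight α T i) j
      (dimerWeight α T i j + α i j * residual (α i j))) := by
  ext l m
  by_cases hl : l = i
  · subst hl
    by_cases hm : m = j
    · subst hm
      simp [dimerWeight, h]
    · simp [dimerWeight, hm]
  · simp [dimerWeight, hl]

variable [Fintype ι]

/-- The row monomer weights collecting `α * y` over the edges outside `T`. -/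
def rowWeight (α : ι → ι → ℝ) (T : Finset (ι × ι)) (y : ι × ι → ℝ) (i : ι) : ℝ :=
  ∑ j with (i, j) ∉ T, α i j * y (i, j)

/-- The column monomer weights collecting `α * z` over the edges outside `T`. -/
def colWeight (α : ι → ι → ℝ) (T : Finset (ι × ι)) (z : ι × ι → ℝ) (j : ι) : ℝ :=
  ∑ i with (i, j) ∉ T, α i j * z (i, j)

lemma dimerWeight_univ (α : ι → ι → ℝ) :
    dimerWeight α univ = fun i j => α i j * residual (α i j) := by
  ext
  simp [dimerWeight]

lemma rowWeight_univ (α : ι → ι → ℝ) (y : ι × ι → ℝ) : rowWeight α univ y = 0 := by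
  ext
  simp [rowWeight]

lemma colWeight_univ (α : ι → ι → ℝ) (z : ι × ι → ℝ) : colWeight α univ z = 0 := by
  ext
  simp [colWeight]

lemma rowWeight_nonneg (hα : ∀ i j, 0 ≤ α i j) {y : ι × ι → ℝ} (hy : ∀ e, 0 < y e) (i : ι) :
    0 ≤ rowWeight α T y i := sum_nonneg fun j _ => mul_nonneg (hα i j) (hy _).le

lemma colWeight_nonneg (hα : ∀ i j, 0 ≤ α i j) {z : ι × ι → ℝ} (hz : ∀ e, 0 < z e) (j : ι) :
    0 ≤ colWeight α T z j := sum_nonneg fun i _ => mul_nonneg (hα i j) (hz _).le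

lemma rowWeight_update (h : (i, j) ∉ T) (y : ι × ι → ℝ) (s : ℝ) :
    rowWeight α T (Function.update y (i, j) s) = Function.update (rowWeight α (insert (i, j) T) y) i
      (rowWeight α (insert (i, j) T) y i + α i j * s) := by
  ext l
  by_cases hl : l = i
  · subst hl
    have herase : ({m | (l, m) ∉ insert (l, j) T} : Finset ι) =
        ({m | (l, m) ∉ T} : Finset ι).erase j := by
      ext m
      simp
    rw [Function.update_self, rowWeight, rowWeight, herase,
      ← sum_erase_add _ _ (mem_filter.2 ⟨mem_univ j, h⟩), Function.update_self]
    refine congrArg (· + _) (sum_congr rfl fun m hm => ?_)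
    rw [Function.update_of_ne fun h' => ne_of_mem_erase hm (congrArg Prod.snd h')]
  · simp [rowWeight, hl]

lemma colWeight_eq_rowWeight_swap (z : ι × ι → ℝ) : colWeight α T z =
    rowWeight (fun j i => α i j) (T.image Prod.swap) (z ∘ Prod.swap) := by
  ext
  simp [colWeight, rowWeight]

lemma colWeight_update (h : (i, j) ∉ T) (z : ι × ι → ℝ) (t : ℝ) :
    colWeight α T (Function.update z (i, j) t) = Function.update (colWeight α (insert (i, j) T) z) j
      (colWeight α (insert (i, j) T) z j + α i j * t) := by
  have hswap : Function.update z (i, j) t ∘ Prod.swap =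
      Function.update (z ∘ Prod.swap) (j, i) t := by
    ext e
    simp [Function.update_apply, Prod.ext_iff, and_comm]
  simp only [colWeight_eq_rowWeight_swap, hswap, image_insert, Prod.swap_prod_mk]
  exact rowWeight_update (by simpa using h) _ _

lemma prod_rpow_le_matchingSum_empty (hα : α ∈ doublyStochastic ℝ ι) {y z : ι × ι → ℝ}
    (hy : ∀ e, 0 < y e) (hz : ∀ e, 0 < z e) :
    ∏ e, (y e * z e) ^ α e.1 e.2 ≤
      matchingSum (dimerWeight α ∅) (rowWeight α ∅ y) (colWeight α ∅ z) univ univ := by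
  obtain ⟨hα₀, hrow, hcol⟩ := mem_doublyStochastic_iff_sum.1 hα
  rw [dimerWeight_empty, matchingSum_zero_dimer]
  calc ∏ e, (y e * z e) ^ α e.1 e.2
      = (∏ i, ∏ j, y (i, j) ^ α i j) * ∏ j, ∏ i, z (i, j) ^ α i j := by
        simp only [mul_rpow (hy _).le (hz _).le, prod_mul_distrib]
        rw [Fintype.prod_prod_type, Fintype.prod_prod_type_right]
    _ ≤ _ := by
        gcongr with i _ j _
        · exact prod_nonneg fun _ _ => prod_nonneg fun _ _ => rpow_nonneg (hz _).le _
        · exact prod_nonneg fun i _ => rowWeight_nonneg hα₀ hy i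
        · exact fun i _ => prod_nonneg fun _ _ => rpow_nonneg (hy _).le _
        · simpa [rowWeight] using geom_mean_le_arith_mean_weighted univ (α i)
            (fun j => y (i, j)) (fun j _ => hα₀ i j) (hrow i) fun j _ => (hy _).le
        · exact fun i _ => prod_nonneg fun _ _ => rpow_nonneg (hz _).le _
        · simpa [colWeight] using geom_mean_le_arith_mean_weighted univ (fun i => α i j)
            (fun i => z (i, j)) (fun i _ => hα₀ i j) (hcol j) fun i _ => (hz _).le

lemma prod_sdiff_update (h : (i, j) ∉ T) (y z : ι × ι → ℝ) (s t : ℝ) :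
    ∏ e ∈ univ \ T, (Function.update y (i, j) s e * Function.update z (i, j) t e) ^ α e.1 e.2 =
      (∏ e ∈ univ \ insert (i, j) T, (y e * z e) ^ α e.1 e.2) * (s * t) ^ α i j := by
  rw [sdiff_insert, ← prod_erase_mul _ _ (mem_sdiff.2 ⟨mem_univ (i, j), h⟩), Function.update_self,
    Function.update_self]
  refine congrArg (· * _) (prod_congr rfl fun e he => ?_)
  rw [Function.update_of_ne (ne_of_mem_erase he), Function.update_of_ne (ne_of_mem_erase he)]

-- Moving one edge at a time from the monomer weights into `T` trades `(y e * z e) ^ α e` for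
-- `residual (α e)`.
theorem prod_residual_mul_prod_rpow_le_matchingSum (hα : α ∈ doublyStochastic ℝ ι)
    (T : Finset (ι × ι)) {y z : ι × ι → ℝ} (hy : ∀ e, 0 < y e) (hz : ∀ e, 0 < z e) :
    (∏ e ∈ T, residual (α e.1 e.2)) * ∏ e ∈ univ \ T, (y e * z e) ^ α e.1 e.2 ≤
      matchingSum (dimerWeight α T) (rowWeight α T y) (colWeight α T z) univ univ := by
  have hα₀ := (mem_doublyStochastic_iff_sum.1 hα).1
  have hα₁ : ∀ i j, α i j ≤ 1 := fun i j => le_one_of_mem_doublyStochastic hα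
  induction T using Finset.induction_on generalizing y z with
  | empty => simpa using prod_rpow_le_matchingSum_empty hα hy hz
  | insert e T he ih =>
    obtain ⟨i, j⟩ := e
    have hnonneg : ∀ R C, 0 ≤ matchingSum (dimerWeight α T) (rowWeight α (insert (i, j) T) y)
        (colWeight α (insert (i, j) T) z) R C := matchingSum_nonneg (dimerWeight_nonneg hα₀ hα₁)
          (rowWeight_nonneg hα₀ hy) (colWeight_nonneg hα₀ hz)
    have hupdate : ∀ {x : ι × ι → ℝ}, (∀ e, 0 < x e) → ∀ s, 0 < s →
        ∀ e, 0 < Function.update x (i, j) s e := fun hx _ hs =>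
      (Function.forall_update_iff _ fun _ a => 0 < a).2 ⟨hs, fun e _ => hx e⟩
    have hbilinear := fun s t hs ht => ih (hupdate hy s hs) (hupdate hz t ht)
    simp only [prod_sdiff_update he, rowWeight_update he, colWeight_update he,
      matchingSum_update_row_add (mem_univ i), matchingSum_update_column_add (mem_univ j)]
      at hbilinear
    rw [dimerWeight_insert he, matchingSum_update_dimer_add (mem_univ i) (mem_univ j),
      prod_insert he, mul_comm (residual _), mul_right_comm]
    exact mul_residual_le_of_bilinear (hnonneg _ _) (hnonneg _ _) (hnonneg _ _) (hnonneg _ _)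
      (hα₀ i j) (hα₁ i j)
      (matchingSum_mul_erase_le (dimerWeight_nonneg hα₀ hα₁) (mem_univ i) (mem_univ j))
      fun s t hs ht => by linarith [hbilinear s t hs ht]

theorem prod_residual_le_permanent (hα : α ∈ doublyStochastic ℝ ι) :
    ∏ i, ∏ j, residual (α i j) ≤
      (Matrix.of fun i j => α i j * residual (α i j)).permanent := by
  have h := prod_residual_mul_prod_rpow_le_matchingSum hα univ (y := 1) (z := 1)
    (fun _ => one_pos) fun _ => one_pos
  rwa [dimerWeight_univ, rowWeight_univ, colWeight_univ, matchingSum_zero_monomer_univ, sdiff_self,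
    bot_eq_empty, prod_empty, mul_one, Fintype.prod_prod_type] at h

end Permanent

section Counting

variable {n M : ℕ} {k : Matrix (Fin n) (Fin n) ℕ} {σ : Equiv.Perm (Fin n)}

lemma permMat_apply (σ : Equiv.Perm (Fin n)) (i j : Fin n) :
    permMat σ i j = if σ i = j then 1 else 0 := rfl

lemma permMat_injective : Function.Injective (permMat : Equiv.Perm (Fin n) → _) := by
  intro σ τ h
  ext1 i
  have hi := congrFun (congrFun h i) (σ i)
  rw [permMat_apply, permMat_apply, if_pos rfl] at hi
  by_contra hne
  rw [if_neg (Ne.symm hne)] at hi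
  exact one_ne_zero hi

lemma isDS_permMat (σ : Equiv.Perm (Fin n)) : isDS 1 n (permMat σ) :=
  ⟨fun i => by simp [permMat_apply], fun j => by simp [permMat_apply, ← Equiv.eq_symm_apply]⟩

lemma permMat_le (h : ∀ i, 1 ≤ k i (σ i)) (i j : Fin n) : permMat σ i j ≤ k i j := by
  rw [permMat_apply]
  split_ifs with hij
  · exact hij ▸ h i
  · exact Nat.zero_le _

lemma _root_.isDS.sub_permMat (hk : isDS (M + 1) n k) (h : ∀ i, 1 ≤ k i (σ i)) :
    isDS M n (k - permMat σ) := by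
  constructor
  · intro i
    simp only [Matrix.sub_apply]
    rw [sum_tsub_distrib _ fun j _ => permMat_le h i j, hk.1, (isDS_permMat σ).1,
      Nat.add_sub_cancel]
  · intro j
    simp only [Matrix.sub_apply]
    rw [sum_tsub_distrib _ fun i _ => permMat_le h i j, hk.2, (isDS_permMat σ).2,
      Nat.add_sub_cancel]

lemma _root_.isDS.apply_le (hk : isDS M n k) (i j : Fin n) : k i j ≤ M := by
  rw [← hk.1 i]
  exact single_le_sum (fun _ _ => Nat.zero_le _) (mem_univ j)

lemma _root_.isDS.apply_le_of_ne (hk : isDS (M + 1) n k) (h : ∀ i, 1 ≤ k i (σ i)) {i j : Fin n}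
    (hj : j ≠ σ i) : k i j ≤ M := by
  simpa [permMat_apply, hj.symm] using (hk.sub_permMat h).apply_le i j

lemma Ccoef_eq_card (M : ℕ) (k : Matrix (Fin n) (Fin n) ℕ) :
    Ccoef M n k = #{τ : Fin M → Equiv.Perm (Fin n) | ∑ m, permMat (τ m) = k} := by
  rw [Ccoef, Nat.card_eq_fintype_card, Fintype.card_subtype]

lemma Ccoef_zero_zero : Ccoef 0 n 0 = 1 := by simp [Ccoef_eq_card]

lemma Ccoef_one_le (k : Matrix (Fin n) (Fin n) ℕ) : Ccoef 1 n k ≤ 1 := by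
  rw [Ccoef_eq_card, card_le_one]
  intro σ hσ τ hτ
  have hsum := (mem_filter.1 hσ).2.trans (mem_filter.1 hτ).2.symm
  rw [Fin.sum_univ_one, Fin.sum_univ_one] at hsum
  ext1 m
  rw [Subsingleton.elim m 0, permMat_injective hsum]

/-- The number of ways to complete `σ` to an `(M + 1)`-tuple whose permutation matrices
sum to `k`. -/
def completions (M : ℕ) (k : Matrix (Fin n) (Fin n) ℕ) (σ : Equiv.Perm (Fin n)) : ℕ :=
  #{τ : Fin M → Equiv.Perm (Fin n) | permMat σ + ∑ m, permMat (τ m) = k}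

lemma completions_of_le (M : ℕ) (h : ∀ i, 1 ≤ k i (σ i)) :
    completions M k σ = Ccoef M n (k - permMat σ) := by
  have hk : permMat σ + (k - permMat σ) = k := by
    ext i j
    exact Nat.add_sub_of_le (permMat_le h i j)
  rw [Ccoef_eq_card, completions]
  refine congrArg card (filter_congr fun τ _ => ?_)
  conv_lhs => rhs; rw [← hk]
  exact add_right_inj (permMat σ)

lemma one_le_of_completions_pos (h : 0 < completions M k σ) (i : Fin n) : 1 ≤ k i (σ i) := by
  obtain ⟨τ, hτ⟩ := card_pos.1 h
  rw [← (mem_filter.1 hτ).2, Matrix.add_apply, permMat_apply, if_pos rfl]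
  exact Nat.le_add_right _ _

lemma sum_head_eq_sum_mul_completions (M : ℕ) (k : Matrix (Fin n) (Fin n) ℕ)
    (g : Equiv.Perm (Fin n) → ℕ) :
    ∑ τ : Fin (M + 1) → Equiv.Perm (Fin n) with ∑ m, permMat (τ m) = k, g (τ 0) =
      ∑ σ, g σ * completions M k σ := by
  rw [sum_filter, ← (Fin.consEquiv fun _ => Equiv.Perm (Fin n)).sum_comp, Fintype.sum_prod_type]
  refine sum_congr rfl fun σ _ => ?_
  rw [completions, card_filter, mul_sum]
  refine sum_congr rfl fun τ _ => ?_
  simp [Fin.consEquiv, Fin.sum_univ_succ]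

lemma sum_completions (M : ℕ) (k : Matrix (Fin n) (Fin n) ℕ) :
    ∑ σ, completions M k σ = Ccoef (M + 1) n k := by
  simpa [Ccoef_eq_card] using (sum_head_eq_sum_mul_completions M k 1).symm

lemma sum_filter_apply_eq_sum_filter_head (M : ℕ) (k : Matrix (Fin n) (Fin n) ℕ)
    (g : Equiv.Perm (Fin n) → ℕ) (m : Fin (M + 1)) :
    ∑ τ : Fin (M + 1) → Equiv.Perm (Fin n) with ∑ m, permMat (τ m) = k, g (τ m) =
      ∑ τ : Fin (M + 1) → Equiv.Perm (Fin n) with ∑ m, permMat (τ m) = k, g (τ 0) := by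
  rw [sum_filter, sum_filter,
    ← (Equiv.arrowCongr (Equiv.swap 0 m) (Equiv.refl (Equiv.Perm (Fin n)))).sum_comp]
  refine sum_congr rfl fun τ _ => ?_
  have hsum : ∑ l, permMat (τ (Equiv.swap 0 m l)) = ∑ l, permMat (τ l) :=
    Equiv.sum_comp (Equiv.swap 0 m) fun l => permMat (τ l)
  simp [Equiv.arrowCongr, hsum]

lemma succ_mul_sum_permMat_mul_completions (M : ℕ) (k : Matrix (Fin n) (Fin n) ℕ) (i j : Fin n) :
    (M + 1) * ∑ σ, permMat σ i j * completions M k σ = k i j * Ccoef (M + 1) n k := by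
  calc (M + 1) * ∑ σ, permMat σ i j * completions M k σ
      = ∑ m : Fin (M + 1), ∑ τ : Fin (M + 1) → Equiv.Perm (Fin n) with
          ∑ m, permMat (τ m) = k, permMat (τ m) i j := by
        rw [sum_congr rfl fun m _ =>
          sum_filter_apply_eq_sum_filter_head M k (fun σ => permMat σ i j) m, sum_const, card_univ,
          Fintype.card_fin, smul_eq_mul,
          sum_head_eq_sum_mul_completions M k fun σ => permMat σ i j]
    _ = ∑ τ : Fin (M + 1) → Equiv.Perm (Fin n) with ∑ m, permMat (τ m) = k, k i j := by
        rw [sum_comm]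
        refine sum_congr rfl fun τ hτ => ?_
        rw [← Matrix.sum_apply, (mem_filter.1 hτ).2]
    _ = k i j * Ccoef (M + 1) n k := by rw [sum_const, ← Ccoef_eq_card, smul_eq_mul, mul_comm]

end Counting

section BetheCoefficient

variable {n M : ℕ} {k : Matrix (Fin n) (Fin n) ℕ} {σ : Equiv.Perm (Fin n)}

/-- The contribution of a single matrix entry to `CB`, apart from the prefactor `M! ^ (2 * n)`. -/
def entryFactor (M x : ℕ) : ℝ := ((M - x).factorial : ℝ) / (M.factorial * x.factorial)

lemma CB_eq_mul_prod_entryFactor (M : ℕ) (k : Matrix (Fin n) (Fin n) ℕ) :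
    CB M n k = (M.factorial : ℝ) ^ (2 * n) * ∏ i, ∏ j, entryFactor M (k i j) := by
  simp only [CB, entryFactor, prod_div_distrib, prod_mul_distrib, prod_const, card_univ,
    Fintype.card_fin]
  rw [← pow_mul, ← sq, mul_div_assoc]

lemma CB_pos (M : ℕ) (k : Matrix (Fin n) (Fin n) ℕ) : 0 < CB M n k := by
  unfold CB
  positivity

lemma CB_zero_zero : CB 0 n 0 = 1 := by simp [CB]

lemma CB_one (hk : isDS 1 n k) : CB 1 n k = 1 := by
  have h : ∀ i j, entryFactor 1 (k i j) = 1 := fun i j => by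
    have := hk.apply_le i j
    interval_cases k i j <;> simp [entryFactor]
  simp [CB_eq_mul_prod_entryFactor, h]

/-- The matrix `k / M`, which is doubly stochastic for `k ∈ K(M,n)`. -/
def normalized (M : ℕ) (k : Matrix (Fin n) (Fin n) ℕ) (i j : Fin n) : ℝ := k i j / M

lemma normalized_pos (hM : M ≠ 0) {i j : Fin n} (h : 1 ≤ k i j) : 0 < normalized M k i j :=
  div_pos (mod_cast h) (mod_cast hM.bot_lt)

lemma _root_.isDS.normalized_mem_doublyStochastic (hM : M ≠ 0) (hk : isDS M n k) :
    normalized M k ∈ doublyStochastic ℝ (Fin n) := by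
  have hM' : (M : ℝ) ≠ 0 := mod_cast hM
  refine mem_doublyStochastic_iff_sum.2 ⟨fun i j => div_nonneg (Nat.cast_nonneg _)
    (Nat.cast_nonneg _), fun i => ?_, fun j => ?_⟩
  · simp only [normalized]
    rw [← sum_div, ← Nat.cast_sum, hk.1, div_self hM']
  · simp only [normalized]
    rw [← sum_div, ← Nat.cast_sum, hk.2, div_self hM']

lemma _root_.isDS.residual_normalized_pos (hM : M ≠ 0) (hk : isDS M n k) (i j : Fin n) :
    0 < residual (normalized M k i j) :=
  residual_pos (le_one_of_mem_doublyStochastic (hk.normalized_mem_doublyStochastic hM))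

lemma entryFactor_pred (M : ℕ) {x : ℕ} (hx : 1 ≤ x) :
    entryFactor M (x - 1) =
      entryFactor (M + 1) x * (((M : ℝ) + 1) ^ 2 * (x / ((M + 1 : ℕ) : ℝ))) := by
  obtain ⟨x, rfl⟩ := Nat.exists_eq_add_of_le' hx
  simp only [entryFactor, Nat.add_sub_cancel, Nat.add_sub_add_right, Nat.factorial_succ]
  push_cast
  field_simp

lemma entryFactor_mul_residual {M x : ℕ} (hx : x ≤ M) :
    entryFactor M x * residual (x / ((M + 1 : ℕ) : ℝ)) = entryFactor (M + 1) x := by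
  obtain ⟨d, rfl⟩ := Nat.exists_eq_add_of_le hx
  have hne : (x : ℝ) / ((x + d + 1 : ℕ) : ℝ) ≠ 1 := by
    rw [Ne, div_eq_one_iff_eq (by positivity), Nat.cast_inj]
    omega
  rw [residual_of_ne hne]
  simp only [entryFactor, Nat.add_sub_cancel_left, Nat.sub_add_comm (Nat.le_add_right x d),
    Nat.factorial_succ]
  push_cast
  field_simp
  ring

lemma prod_entryFactor_sub_permMat (hk : isDS (M + 1) n k) (h : ∀ i, 1 ≤ k i (σ i)) (i : Fin n) :
    (∏ j, entryFactor M ((k - permMat σ) i j)) * ∏ j, residual (normalized (M + 1) k i j) =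
      (∏ j, entryFactor (M + 1) (k i j)) * (((M : ℝ) + 1) ^ 2 *
        (normalized (M + 1) k i (σ i) * residual (normalized (M + 1) k i (σ i)))) := by
  have hoff : ∀ j ∈ univ.erase (σ i), entryFactor M ((k - permMat σ) i j) *
      residual (normalized (M + 1) k i j) = entryFactor (M + 1) (k i j) := by
    intro j hj
    have hne := ne_of_mem_erase hj
    rw [Matrix.sub_apply, permMat_apply, if_neg hne.symm, Nat.sub_zero, normalized,
      entryFactor_mul_residual (hk.apply_le_of_ne h hne)]
  rw [← prod_mul_distrib, ← mul_prod_erase _ _ (mem_univ (σ i)), prod_congr rfl hoff,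
    Matrix.sub_apply, permMat_apply, if_pos rfl, entryFactor_pred M (h i),
    ← mul_prod_erase _ (fun j => entryFactor (M + 1) (k i j)) (mem_univ (σ i)), normalized]
  ring

lemma CB_sub_permMat_mul (hk : isDS (M + 1) n k) (h : ∀ i, 1 ≤ k i (σ i)) :
    CB M n (k - permMat σ) * ∏ i, ∏ j, residual (normalized (M + 1) k i j) =
      CB (M + 1) n k *
        ∏ i, normalized (M + 1) k i (σ i) * residual (normalized (M + 1) k i (σ i)) := by
  rw [CB_eq_mul_prod_entryFactor, CB_eq_mul_prod_entryFactor, mul_assoc, ← prod_mul_distrib,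
    prod_congr rfl fun i _ => prod_entryFactor_sub_permMat hk h i, prod_mul_distrib,
    prod_mul_distrib, prod_const, card_univ, Fintype.card_fin, Nat.factorial_succ]
  push_cast
  simp only [mul_pow, pow_mul]
  ring

theorem CB_le_Ccoef (hk : isDS M n k) : CB M n k ≤ Ccoef M n k := by
  induction M generalizing k with
  | zero =>
    obtain rfl : k = 0 := by
      ext i j
      exact Nat.le_zero.1 (hk.apply_le i j)
    rw [CB_zero_zero, Ccoef_zero_zero, Nat.cast_one]
  | succ M ih =>
    have hγ := hk.normalized_mem_doublyStochastic M.succ_ne_zero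
    set γ := normalized (M + 1) k
    set P := ∏ i, ∏ j, residual (γ i j)
    have hP : 0 < P := prod_pos fun i _ => prod_pos fun j _ =>
      hk.residual_normalized_pos M.succ_ne_zero i j
    have hterm : ∀ σ : Equiv.Perm (Fin n), CB (M + 1) n k * ∏ i, γ i (σ i) * residual (γ i (σ i)) ≤
        completions M k σ * P := by
      intro σ
      by_cases h : ∀ i, 1 ≤ k i (σ i)
      · rw [← CB_sub_permMat_mul hk h, completions_of_le M h]
        exact mul_le_mul_of_nonneg_right (ih (hk.sub_permMat h)) hP.le
      · push Not at h
        obtain ⟨i, hi⟩ := h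
        have hγi : γ i (σ i) = 0 := by simp [γ, normalized, Nat.lt_one_iff.1 hi]
        rw [prod_eq_zero (mem_univ i) (by rw [hγi, zero_mul]), mul_zero]
        positivity
    refine le_of_mul_le_mul_right ?_ hP
    calc CB (M + 1) n k * P
        ≤ CB (M + 1) n k * ∑ σ : Equiv.Perm (Fin n), ∏ i, γ i (σ i) * residual (γ i (σ i)) := by
          rw [← permanent_of_eq_sum fun i j => γ i j * residual (γ i j)]
          exact mul_le_mul_of_nonneg_left (prod_residual_le_permanent hγ) (CB_pos _ _).le
      _ ≤ ∑ σ, completions M k σ * P := by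
          rw [mul_sum]
          exact sum_le_sum fun σ _ => hterm σ
      _ = Ccoef (M + 1) n k * P := by rw [← sum_mul, ← sum_completions, Nat.cast_sum]

lemma _root_.isDS.Ccoef_pos (hk : isDS M n k) : 0 < Ccoef M n k := by
  exact_mod_cast (CB_pos M k).trans_le (CB_le_Ccoef hk)

end BetheCoefficient

section UpperBound

variable {n M : ℕ} {k : Matrix (Fin n) (Fin n) ℕ} {σ : Equiv.Perm (Fin n)}

/-- The law of the first permutation in a uniformly random `(M + 1)`-tuple whose permutation
matrices sum to `k`. -/
def headLaw (M : ℕ) (k : Matrix (Fin n) (Fin n) ℕ) (σ : Equiv.Perm (Fin n)) : ℝ :=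
  completions M k σ / Ccoef (M + 1) n k

lemma headLaw_nonneg (σ : Equiv.Perm (Fin n)) : 0 ≤ headLaw M k σ :=
  div_nonneg (Nat.cast_nonneg _) (Nat.cast_nonneg _)

lemma sum_headLaw (hk : isDS (M + 1) n k) : ∑ σ, headLaw M k σ = 1 := by
  simp only [headLaw]
  rw [← sum_div, ← Nat.cast_sum, sum_completions, div_self (mod_cast hk.Ccoef_pos.ne')]

lemma marginal_headLaw (hk : isDS (M + 1) n k) :
    marginal (headLaw M k) = normalized (M + 1) k := by
  have hC : (Ccoef (M + 1) n k : ℝ) ≠ 0 := mod_cast hk.Ccoef_pos.ne'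
  funext i j
  have hcount : ((M + 1 : ℕ) : ℝ) * ∑ σ : Equiv.Perm (Fin n) with σ i = j,
      (completions M k σ : ℝ) = k i j * Ccoef (M + 1) n k := by
    have hcount := succ_mul_sum_permMat_mul_completions M k i j
    simp only [permMat_apply, ite_mul, one_mul, zero_mul, ← sum_filter] at hcount
    exact_mod_cast hcount
  simp only [marginal, headLaw, normalized]
  rw [← sum_div, div_eq_div_iff hC (by positivity), ← hcount, mul_comm]

lemma log_CB_sub_permMat (hk : isDS (M + 1) n k) (h : ∀ i, 1 ≤ k i (σ i)) :
    log (CB M n (k - permMat σ)) = log (CB (M + 1) n k) +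
      ∑ i, (log (normalized (M + 1) k i (σ i)) + log (1 - normalized (M + 1) k i (σ i))) -
        ∑ i, ∑ j, log (1 - normalized (M + 1) k i j) := by
  have hres := hk.residual_normalized_pos M.succ_ne_zero
  have hγ : ∀ i, 0 < normalized (M + 1) k i (σ i) := fun i => normalized_pos M.succ_ne_zero (h i)
  have hrow : ∀ i, ∏ j, residual (normalized (M + 1) k i j) ≠ 0 := fun i =>
    prod_ne_zero_iff.2 fun j _ => (hres i j).ne'
  have hdiag : ∀ i, normalized (M + 1) k i (σ i) * residual (normalized (M + 1) k i (σ i)) ≠ 0 :=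
    fun i => (mul_pos (hγ i) (hres i _)).ne'
  have hlog := congrArg log (CB_sub_permMat_mul hk h)
  rw [log_mul (CB_pos _ _).ne' (prod_ne_zero_iff.2 fun i _ => hrow i),
    log_mul (CB_pos _ _).ne' (prod_ne_zero_iff.2 fun i _ => hdiag i),
    log_prod fun i _ => hrow i, log_prod fun i _ => hdiag i,
    sum_congr rfl fun i _ => log_prod fun j _ => (hres i j).ne',
    sum_congr rfl fun i _ => log_mul (hγ i).ne' (hres i (σ i)).ne'] at hlog
  simp only [log_residual] at hlog
  exact eq_sub_of_add_eq hlog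

lemma log_Ccoef_eq (hk : isDS (M + 1) n k) :
    log (Ccoef (M + 1) n k) =
      ∑ σ, negMulLog (headLaw M k σ) + ∑ σ, headLaw M k σ * log (completions M k σ) := by
  have hC : (Ccoef (M + 1) n k : ℝ) ≠ 0 := mod_cast hk.Ccoef_pos.ne'
  rw [← one_mul (log (Ccoef (M + 1) n k)), ← sum_headLaw hk, sum_mul, ← sum_add_distrib]
  refine sum_congr rfl fun σ _ => ?_
  by_cases h : (completions M k σ : ℝ) = 0
  · simp [headLaw, h]
  · rw [negMulLog, headLaw, log_div h hC]
    ring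

lemma betheEntropy_add_sum_mul_log {ι : Type*} [Fintype ι] (γ : ι → ι → ℝ) :
    betheEntropy γ + ∑ i, ∑ j, γ i j * (log (γ i j) + log (1 - γ i j)) =
      ∑ i, ∑ j, log (1 - γ i j) := by
  simp only [betheEntropy, ← sum_add_distrib, negMulLog]
  refine sum_congr rfl fun i _ => sum_congr rfl fun j _ => ?_
  ring

lemma sum_headLaw_mul_log_completions_le (hk : isDS (M + 1) n k) {b : ℝ}
    (hb : ∀ k', isDS M n k' → log (Ccoef M n k') ≤ b + log (CB M n k')) :
    ∑ σ, headLaw M k σ * log (completions M k σ) ≤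
      b + log (CB (M + 1) n k) - betheEntropy (normalized (M + 1) k) := by
  set γ := normalized (M + 1) k
  have hterm : ∀ σ, headLaw M k σ * log (completions M k σ) ≤ headLaw M k σ *
      (b + log (CB (M + 1) n k) - ∑ i, ∑ j, log (1 - γ i j) +
        ∑ i, (log (γ i (σ i)) + log (1 - γ i (σ i)))) := by
    intro σ
    obtain h | h := (completions M k σ).eq_zero_or_pos
    · simp [headLaw, h]
    · have hσ := one_le_of_completions_pos h
      have hle := hb _ (hk.sub_permMat hσ)
      rw [log_CB_sub_permMat hk hσ] at hle
      rw [completions_of_le M hσ]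
      exact mul_le_mul_of_nonneg_left (by linarith) (headLaw_nonneg σ)
  have hmarginal : ∑ σ, headLaw M k σ * ∑ i, (log (γ i (σ i)) + log (1 - γ i (σ i))) =
      ∑ i, ∑ j, γ i j * (log (γ i j) + log (1 - γ i j)) := by
    simp only [mul_sum]
    rw [sum_comm]
    refine sum_congr rfl fun i _ => ?_
    rw [← sum_marginal_mul _ i fun j => log (γ i j) + log (1 - γ i j), marginal_headLaw hk]
  refine (sum_le_sum fun σ _ => hterm σ).trans_eq ?_
  rw [sum_congr rfl fun σ _ => mul_add _ _ _, sum_add_distrib, ← sum_mul, sum_headLaw hk,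
    hmarginal, ← betheEntropy_add_sum_mul_log γ]
  ring

theorem log_Ccoef_le (hk : isDS (M + 1) n k) :
    log (Ccoef (M + 1) n k) ≤ M * (n * (log 2 / 2)) + log (CB (M + 1) n k) := by
  induction M generalizing k with
  | zero =>
    have hone : Ccoef 1 n k = 1 := le_antisymm (Ccoef_one_le k) hk.Ccoef_pos
    simp [hone, CB_one hk]
  | succ M ih =>
    have hentropy := sum_negMulLog_le_betheEntropy headLaw_nonneg (sum_headLaw hk)
    have hrest := sum_headLaw_mul_log_completions_le hk fun _ hk' => ih hk'
    rw [marginal_headLaw hk, Fintype.card_fin] at hentropy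
    rw [log_Ccoef_eq hk]
    push_cast
    linarith

end UpperBound

end BethePermanent

/-- For `n, M ≥ 1` and `k ∈ K(M,n)`:
`C_{B,M,n}(k) ≤ C_{M,n}(k) ≤ 2^{n(M−1)/2} · C_{B,M,n}(k)`; in particular `C_{M,n}(k) ≥ 1`. -/
theorem statement_3 (n M : ℕ) (hn : 1 ≤ n) (hM : 1 ≤ M)
    (k : Matrix (Fin n) (Fin n) ℕ) (hk : isDS M n k) :
    CB M n k ≤ (Ccoef M n k : ℝ) ∧
      (Ccoef M n k : ℝ) ≤ (2 : ℝ) ^ (((n : ℝ) * ((M : ℝ) - 1)) / 2) * CB M n k ∧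
      1 ≤ Ccoef M n k := by
  obtain ⟨M, rfl⟩ := Nat.exists_eq_add_of_le' hM
  refine ⟨BethePermanent.CB_le_Ccoef hk, ?_, hk.Ccoef_pos⟩
  have hC : (0 : ℝ) < Ccoef (M + 1) n k := Nat.cast_pos.2 hk.Ccoef_pos
  have hB := BethePermanent.CB_pos (M + 1) k
  rw [← Real.log_le_log_iff hC (by positivity), Real.log_mul (by positivity) hB.ne',
    Real.log_rpow two_pos]
  refine (BethePermanent.log_Ccoef_le hk).trans_eq ?_
  push_cast
  ring
end
end

section
/- For all integers n, M ≥ 1 and every k ∈ K(M,n), the coefficients satisfy (M^M/M!)^n · (n!/n^n)^{M−1} · C_{scS,M,n}(k) ≤ C_{M,n}(k) ≤ (M^M/M!)^n · C_{scS,M,n}(k). -/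
open scoped BigOperators

noncomputable section

/-- `C_{scS,M,n}(k) = (M!)^{2n} / (M^{nM} · ∏_{i,j} k(i,j)!)`. -/
def CscS (M n : ℕ) (k : Matrix (Fin n) (Fin n) ℕ) : ℝ :=
  (M.factorial : ℝ) ^ (2 * n) / ((M : ℝ) ^ (n * M) * ∏ i, ∏ j, ((k i j).factorial : ℝ))

/-!
Weighting `Ccoef M n k` by `∏ i, ∏ j, k(i,j)!` amounts to telling parallel edges apart, and the
weighted count `N_M(k)` satisfies `N_{M+1}(k) = ∑ σ, (∏ i, k(i, σ i)) * N_M(k - P_σ)`. The weights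
in this sum add up to the permanent of `k`, which lies between `(M+1)^n * n!/n^n` (van der Waerden)
and `(M+1)^n` (the product of the row sums). Induction on `M` gives
`M!^n * (n!/n^n)^(M-1) ≤ N_M(k) ≤ M!^n`.

The van der Waerden bound is proved by Gurvits' method. By continuity `A` may be taken to
have positive entries. Its permanent is then the mixed coefficient of the stable polynomial
`p = ∏ i, ∑ j, A(i,j) * x_j`, and `p(x) ≥ ∏ j, x_j` by the weighted AM-GM inequality as `A` is
doubly stochastic. Fixing all variables of `p` but one at positive values leaves a real-rooted
polynomial; AM-GM applied to its roots shows that passing to the coefficient of degree one in that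
variable worsens such a lower bound at most by the factor `((m-1)/m)^(m-1)`, where `m` is the
number of variables before the passage. These factors multiply to `n!/n^n`.
-/

section Univariate

open Polynomial

theorem multiset_prod_le_sum_div_card_pow {s : Multiset ℝ} (hs : ∀ x ∈ s, 0 ≤ x) :
    s.prod ≤ (s.sum / s.card) ^ s.card := by
  classical
  rcases eq_or_ne s 0 with rfl | hne
  · simp
  have hcard : 0 < (s.card : ℝ) := by exact_mod_cast Multiset.card_pos.mpr hne
  have hnonneg (x : s) : 0 ≤ (x : ℝ) := hs x Multiset.coe_mem
  have amgm := Real.geom_mean_le_arith_mean Finset.univ (fun _ : s ↦ (1 : ℝ)) (fun x ↦ (x : ℝ))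
    (fun _ _ ↦ zero_le_one) (by simpa using hcard) fun x _ ↦ hnonneg x
  simp only [Real.rpow_one, one_mul, Finset.sum_const, Finset.card_univ, Multiset.card_coe,
    nsmul_eq_mul, mul_one, ← Multiset.prod_eq_prod_coe, ← Multiset.sum_eq_sum_coe] at amgm
  have hprod : 0 ≤ s.prod := Multiset.prod_nonneg hs
  simpa using (Real.rpow_inv_le_iff_of_pos hprod
    (div_nonneg (Multiset.sum_nonneg hs) hcard.le) hcard).mp amgm

theorem coeff_one_eq_coeff_zero_mul_sum {K : Type*} [Field K] {f : K[X]} (hf : f.Splits)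
    (h₀ : f.coeff 0 ≠ 0) : f.coeff 1 = f.coeff 0 * (f.roots.map fun r ↦ (-r)⁻¹).sum := by
  rw [coeff_zero_eq_eval_zero] at h₀
  simpa [← coeff_zero_eq_eval_zero, coeff_derivative] using hf.eval_derivative_eq_eval_mul_sum h₀

theorem eval_eq_coeff_zero_mul_prod {K : Type*} [Field K] {f : K[X]} (hf : f.Splits)
    (h₀ : f.coeff 0 ≠ 0) (t : K) :
    f.eval t = f.coeff 0 * (f.roots.map fun r ↦ 1 + t * (-r)⁻¹).prod := by
  rw [coeff_zero_eq_eval_zero] at h₀ ⊢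
  rw [hf.eval_eq_prod_roots, hf.eval_eq_prod_roots, mul_assoc, ← Multiset.prod_map_mul]
  congr 2
  refine Multiset.map_congr rfl fun r hr ↦ ?_
  have hr₀ : r ≠ 0 := by
    rintro rfl
    exact h₀ (isRoot_of_mem_roots hr)
  field_simp
  ring

theorem eval_le_of_roots_neg {f : ℝ[X]} (hf : f.Splits) (hroots : ∀ r ∈ f.roots, r < 0)
    (h₀ : 0 < f.coeff 0) (hdeg : f.natDegree ≠ 0) {t : ℝ} (ht : 0 ≤ t) :
    f.eval t ≤ f.coeff 0 * (1 + t * (f.coeff 1 / f.coeff 0) / f.natDegree) ^ f.natDegree := by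
  have hcard := hf.natDegree_eq_card_roots
  have hsum : (f.roots.map fun r ↦ 1 + t * (-r)⁻¹).sum
      = f.natDegree + t * (f.coeff 1 / f.coeff 0) := by
    rw [coeff_one_eq_coeff_zero_mul_sum hf h₀.ne', mul_div_cancel_left₀ _ h₀.ne',
      Multiset.sum_map_add, Multiset.sum_map_mul_left]
    simp [hcard]
  have hfactor : ∀ x ∈ f.roots.map fun r ↦ 1 + t * (-r)⁻¹, 0 ≤ x := by
    simp only [Multiset.mem_map, forall_exists_index, and_imp, forall_apply_eq_imp_iff₂]
    intro r hr
    have : 0 < (-r)⁻¹ := inv_pos.mpr (neg_pos.mpr (hroots r hr))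
    positivity
  have amgm := multiset_prod_le_sum_div_card_pow hfactor
  rw [hsum, Multiset.card_map, ← hcard, add_div, div_self (by exact_mod_cast hdeg)] at amgm
  rw [eval_eq_coeff_zero_mul_prod hf h₀.ne']
  gcongr

theorem coeff_one_pos_of_roots_neg {f : ℝ[X]} (hf : f.Splits) (hroots : ∀ r ∈ f.roots, r < 0)
    (h₀ : 0 < f.coeff 0) (hdeg : f.natDegree ≠ 0) : 0 < f.coeff 1 := by
  rw [coeff_one_eq_coeff_zero_mul_sum hf h₀.ne']
  refine mul_pos h₀ ?_
  have hne : f.roots ≠ ∅ := by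
    rintro hempty
    rw [hf.natDegree_eq_card_roots, hempty] at hdeg
    exact hdeg rfl
  simpa using Multiset.sum_lt_sum_of_nonempty (f := fun _ ↦ (0 : ℝ)) hne
    fun r hr ↦ inv_pos.mpr (neg_pos.mpr (hroots r hr))

theorem coeff_zero_pos_of_mul_le_eval {f : ℝ[X]} {c : ℝ} (h₀ : f.coeff 0 ≠ 0)
    (hc : ∀ t > 0, c * t ≤ f.eval t) : 0 < f.coeff 0 := by
  refine h₀.symm.lt_of_le ?_
  have hlim : Filter.Tendsto (fun t ↦ f.eval t - c * t) (nhdsWithin 0 (Set.Ioi 0))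
      (nhds (f.coeff 0)) := by
    have : Continuous fun t ↦ f.eval t - c * t := by fun_prop
    simpa [coeff_zero_eq_eval_zero] using
      (this.tendsto 0).mono_left (nhdsWithin_le_nhds (s := Set.Ioi 0))
  refine ge_of_tendsto hlim ?_
  filter_upwards [self_mem_nhdsWithin] with t ht
  exact sub_nonneg.mpr (hc t ht)

theorem mul_pow_le_coeff_one {f : ℝ[X]} (hf : f.Splits) (hroots : ∀ r ∈ f.roots, r < 0) {n : ℕ}
    (hn : n ≠ 0) (hdeg : f.natDegree = n + 1) {c : ℝ} (hc : ∀ t > 0, c * t ≤ f.eval t) :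
    c * (n / (n + 1)) ^ n ≤ f.coeff 1 := by
  have h₀ : 0 < f.coeff 0 := by
    refine coeff_zero_pos_of_mul_le_eval (fun h ↦ ?_) hc
    have hf₀ : f ≠ 0 := by
      rintro rfl
      simp at hdeg
    have := hroots 0 ((mem_roots hf₀).mpr (by rwa [IsRoot, ← coeff_zero_eq_eval_zero]))
    exact this.false
  have h₁ := coeff_one_pos_of_roots_neg hf hroots h₀ (by omega)
  -- This `t` minimises the quotient by `t` of the bound in `eval_le_of_roots_neg`.
  set t : ℝ := (n + 1) / n * (f.coeff 0 / f.coeff 1) with ht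
  have htpos : 0 < t := by positivity
  have hle : c * t ≤ f.coeff 0 * ((n + 1) / n) ^ (n + 1) := by
    refine (hc t htpos).trans ((eval_le_of_roots_neg hf hroots h₀ (by omega) htpos.le).trans_eq ?_)
    rw [hdeg, ht]
    congr 2
    push_cast
    field_simp
  calc c * ((n : ℝ) / (n + 1)) ^ n = (c * t) * ((n : ℝ) / (n + 1)) ^ n / t := by field_simp
    _ ≤ (f.coeff 0 * ((n + 1) / n) ^ (n + 1)) * ((n : ℝ) / (n + 1)) ^ n / t := by gcongr
    _ = f.coeff 1 := by
      rw [ht, div_pow, div_pow]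
      field_simp
      ring

theorem coeff_one_ne_zero_of_roots_re_neg {f : ℂ[X]} (hdeg : f.natDegree ≠ 0)
    (hroots : ∀ r, f.IsRoot r → r.re < 0) : f.coeff 1 ≠ 0 := by
  intro h₁
  have hdeg' : 0 < f.degree := natDegree_pos_iff_degree_pos.mp (Nat.pos_of_ne_zero hdeg)
  have hzero : (0 : ℂ) ∈ (derivative f).rootSet ℂ := by
    rw [mem_rootSet_of_ne (derivative_ne_zero.mpr hdeg), coe_aeval_eq_eval,
      ← coeff_zero_eq_eval_zero, coeff_derivative]
    simp [h₁]
  have hhull : convexHull ℝ (f.rootSet ℂ) ⊆ {z | z.re < 0} :=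
    convexHull_min (fun r hr ↦ hroots r (by simpa using (mem_rootSet.mp hr).2))
      (convex_halfSpace_re_lt 0)
  exact lt_irrefl (0 : ℝ) (hhull (rootSet_derivative_subset_convexHull_rootSet hdeg' hzero))

end Univariate

section StablePolynomial

open MvPolynomial

variable {σ R A : Type*} [CommSemiring R] [CommSemiring A] [Algebra R A] {n d : ℕ}

theorem aeval_smul_of_isHomogeneous {p : MvPolynomial σ R} (hp : p.IsHomogeneous d) (w : A)
    (z : σ → A) : aeval (w • z) p = w ^ d * aeval z p := by
  simp only [aeval_def, eval₂_eq, Finset.mul_sum, Pi.smul_apply, smul_eq_mul, mul_pow]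
  refine Finset.sum_congr rfl fun m hm ↦ ?_
  have hdeg : ∑ i ∈ m.support, m i = d := (hp.degree_eq_sum_deg_support hm).symm
  rw [Finset.prod_mul_distrib, Finset.prod_pow_eq_pow_sum, hdeg]
  ring

theorem aeval_single_one_of_isHomogeneous [DecidableEq σ] {p : MvPolynomial σ R}
    (hp : p.IsHomogeneous d) (i : σ) :
    aeval (Pi.single i (1 : A)) p = algebraMap R A (coeff (Finsupp.single i d) p) := by
  rw [aeval_def, eval₂_eq, Finset.sum_eq_single (Finsupp.single i d)]
  · have hone : ∏ j ∈ (Finsupp.single i d).support,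
        (Pi.single i (1 : A) : σ → A) j ^ Finsupp.single i d j = 1 :=
      Finset.prod_eq_one fun j hj ↦ by
        obtain rfl := Finset.mem_singleton.mp (Finsupp.support_single_subset hj)
        simp
    rw [hone, mul_one]
  · intro m hm hne
    suffices ∃ j ∈ m.support, j ≠ i by
      obtain ⟨j, hj, hji⟩ := this
      rw [Finset.prod_eq_zero hj, mul_zero]
      simp [hji, Finsupp.mem_support_iff.mp hj]
    by_contra! hsupp
    have hsingle : m = Finsupp.single i (m i) := Finsupp.support_subset_singleton.mp
      fun j hj ↦ Finset.mem_singleton.mpr (hsupp j hj)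
    have hdeg : d = m i := by
      rw [hp.degree_eq_sum_deg_support hm, hsingle]
      simp [← Finsupp.degree_apply]
    exact hne (hdeg ▸ hsingle)
  · intro h
    rw [notMem_support_iff.mp h, map_zero, zero_mul]

/-- The univariate polynomial `t ↦ p (t, y)` obtained from `p` by fixing all variables but the
first, with `y` allowed to lie in an `R`-algebra such as `ℂ` over `ℝ`. -/
def slice (p : MvPolynomial (Fin (n + 1)) R) (y : Fin n → A) : Polynomial A :=
  Polynomial.mapAlgHom (aeval y) (finSuccEquiv R n p)

theorem coeff_slice (p : MvPolynomial (Fin (n + 1)) R) (y : Fin n → A) (i : ℕ) :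
    (slice p y).coeff i = aeval y ((finSuccEquiv R n p).coeff i) := by
  simp [slice]

theorem eval_slice (p : MvPolynomial (Fin (n + 1)) R) (y : Fin n → A) (t : A) :
    (slice p y).eval t = aeval (Fin.cons t y : Fin (n + 1) → A) p := by
  have : ((Polynomial.aeval t).restrictScalars R).comp
      ((Polynomial.mapAlgHom (aeval y)).comp (finSuccEquiv R n).toAlgHom)
        = aeval (Fin.cons t y : Fin (n + 1) → A) := by
    ext i
    refine Fin.cases ?_ (fun j ↦ ?_) i <;> simp [finSuccEquiv_X_zero, finSuccEquiv_X_succ]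
  simpa [slice] using DFunLike.congr_fun this p

theorem map_slice {B : Type*} [CommSemiring B] [Algebra R B] (φ : A →ₐ[R] B)
    (p : MvPolynomial (Fin (n + 1)) R) (y : Fin n → A) :
    (slice p y).map φ = slice p (φ ∘ y) := by
  ext i
  rw [Polynomial.coeff_map, coeff_slice, coeff_slice, RingHom.coe_coe,
    comp_aeval_apply]
  rfl

theorem natDegree_slice_le {p : MvPolynomial (Fin (n + 1)) R} (hp : p.IsHomogeneous d)
    (y : Fin n → A) : (slice p y).natDegree ≤ d :=
  calc (slice p y).natDegree ≤ (finSuccEquiv R n p).natDegree := Polynomial.natDegree_map_le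
    _ = p.degreeOf 0 := natDegree_finSuccEquiv p
    _ ≤ p.totalDegree := degreeOf_le_totalDegree p 0
    _ ≤ d := hp.totalDegree_le

theorem coeff_slice_of_isHomogeneous {p : MvPolynomial (Fin (n + 1)) R} (hp : p.IsHomogeneous d)
    (y : Fin n → A) :
    (slice p y).coeff d = algebraMap R A (coeff (Finsupp.single 0 d) p) := by
  have hconst : ((finSuccEquiv R n p).coeff d).IsHomogeneous 0 :=
    hp.finSuccEquiv_coeff_isHomogeneous d 0 (add_zero d)
  rw [coeff_slice, totalDegree_eq_zero_iff_eq_C.mp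
    ((totalDegree_zero_iff_isHomogeneous _).mpr hconst), aeval_C, finSuccEquiv_coeff_coeff]
  congr 2
  ext i
  refine Fin.cases ?_ (fun j ↦ ?_) i <;> simp [Fin.succ_ne_zero]

/-- A real polynomial is strongly stable if it has no zero in the closed right half-plane
`{z | ∀ i, 0 ≤ re (z i)}` other than those with all coordinates on the imaginary axis. The usual
half-plane (or Hurwitz) stability only considers the open half-plane; including part of the boundary
makes the class visibly closed under taking `coeff 1` of a slice, without a limiting argument. -/
def IsStronglyStable (p : MvPolynomial σ ℝ) : Prop :=
  ∀ z : σ → ℂ, (∀ i, 0 ≤ (z i).re) → (∃ i, 0 < (z i).re) → aeval z p ≠ 0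

namespace IsStronglyStable

theorem coeff_single_ne_zero {p : MvPolynomial σ ℝ} (hs : IsStronglyStable p)
    (hp : p.IsHomogeneous d) (i : σ) : coeff (Finsupp.single i d) p ≠ 0 := by
  classical
  have hne : aeval (Pi.single i (1 : ℂ)) p ≠ 0 := by
    refine hs _ (fun j ↦ ?_) ⟨i, by simp⟩
    rcases eq_or_ne j i with rfl | hj
    · simp
    · simp [hj]
  rw [aeval_single_one_of_isHomogeneous hp] at hne
  exact fun h ↦ hne (by rw [h, map_zero])

variable {p : MvPolynomial (Fin (n + 1)) ℝ}

theorem natDegree_slice {K : Type*} [CommSemiring K] [Algebra ℝ K] [Nontrivial K]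
    (hs : IsStronglyStable p) (hp : p.IsHomogeneous d) (y : Fin n → K) :
    (slice p y).natDegree = d := by
  refine (natDegree_slice_le hp y).antisymm (Polynomial.le_natDegree_of_ne_zero ?_)
  rw [coeff_slice_of_isHomogeneous hp]
  exact (map_ne_zero_iff _ (algebraMap ℝ K).injective).mpr (hs.coeff_single_ne_zero hp 0)

theorem re_neg_of_isRoot_slice (hs : IsStronglyStable p) {y : Fin n → ℂ}
    (hy : ∀ i, 0 ≤ (y i).re) (hy' : ∃ i, 0 < (y i).re) {r : ℂ} (hr : (slice p y).IsRoot r) :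
    r.re < 0 := by
  by_contra! hre
  obtain ⟨i, hi⟩ := hy'
  rw [Polynomial.IsRoot, eval_slice] at hr
  exact hs _ (Fin.cases hre hy) ⟨i.succ, hi⟩ hr

theorem coeff_one_finSuccEquiv (hs : IsStronglyStable p) (hp : p.IsHomogeneous d) (hd : d ≠ 0) :
    IsStronglyStable ((finSuccEquiv ℝ n p).coeff 1) := by
  intro y hy hy'
  rw [← coeff_slice]
  exact coeff_one_ne_zero_of_roots_re_neg (by rwa [hs.natDegree_slice hp])
    fun r hr ↦ hs.re_neg_of_isRoot_slice hy hy' hr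

theorem im_eq_zero_of_isRoot_slice [NeZero n] (hs : IsStronglyStable p) (hp : p.IsHomogeneous d)
    {y : Fin n → ℝ} (hy : ∀ i, 0 < y i) {r : ℂ} (hr : (slice p fun i ↦ (y i : ℂ)).IsRoot r) :
    r.im = 0 := by
  by_contra him
  -- Rotating by `w` makes `r` purely imaginary while `y` keeps positive real part.
  set w : ℂ := ⟨1, r.re / r.im⟩ with hw
  have hzero : aeval (w • (Fin.cons r fun i ↦ (y i : ℂ) : Fin (n + 1) → ℂ)) p = 0 := by
    rw [aeval_smul_of_isHomogeneous hp, ← eval_slice, hr.eq_zero, mul_zero]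
  have hhead : (w * r).re = 0 := by simp [hw, him]
  have htail (i : Fin n) : (w * y i).re = y i := by simp [hw]
  exact hs _ (Fin.cases hhead.ge fun i ↦ (hy i).le.trans_eq (htail i).symm)
    ⟨(0 : Fin n).succ, (hy 0).trans_eq (htail 0).symm⟩ hzero

theorem splits_slice [NeZero n] (hs : IsStronglyStable p) (hp : p.IsHomogeneous d) {y : Fin n → ℝ}
    (hy : ∀ i, 0 < y i) : (slice p y).Splits := by
  refine Polynomial.Splits.of_splits_map Complex.ofRealHom (IsAlgClosed.splits _) fun r hr ↦ ?_
  have him := hs.im_eq_zero_of_isRoot_slice hp hy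
    ((map_slice Complex.ofRealAm p y) ▸ Polynomial.isRoot_of_mem_roots hr)
  exact ⟨r.re, Complex.ext rfl him.symm⟩

theorem neg_of_mem_roots_slice [NeZero n] (hs : IsStronglyStable p) {y : Fin n → ℝ}
    (hy : ∀ i, 0 < y i) {r : ℝ} (hr : r ∈ (slice p y).roots) : r < 0 := by
  have hroot := (Polynomial.isRoot_of_mem_roots hr).map (f := Complex.ofRealHom)
  exact hs.re_neg_of_isRoot_slice (y := Complex.ofRealAm ∘ y) (fun i ↦ (hy i).le) ⟨0, hy 0⟩
    ((map_slice Complex.ofRealAm p y) ▸ hroot)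

end IsStronglyStable

/-- `c` is a lower bound for Gurvits' capacity `inf {p x / ∏ i, x i | x > 0}` of `p`. The capacity
itself is avoided because the real infimum of a set unbounded below is `0`. -/
def IsCapacityLowerBound [Fintype σ] (p : MvPolynomial σ ℝ) (c : ℝ) : Prop :=
  ∀ x : σ → ℝ, (∀ i, 0 < x i) → c * ∏ i, x i ≤ aeval x p

namespace IsCapacityLowerBound

theorem coeff_one_finSuccEquiv [NeZero n] {p : MvPolynomial (Fin (n + 1)) ℝ} {c : ℝ}
    (hc : IsCapacityLowerBound p c) (hs : IsStronglyStable p) (hp : p.IsHomogeneous (n + 1)) :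
    IsCapacityLowerBound ((finSuccEquiv ℝ n p).coeff 1) (c * (n / (n + 1)) ^ n) := by
  intro y hy
  rw [← coeff_slice, mul_right_comm]
  refine mul_pow_le_coeff_one (hs.splits_slice hp hy) (fun r ↦ hs.neg_of_mem_roots_slice hy)
    (NeZero.ne n) (hs.natDegree_slice hp y) fun t ht ↦ ?_
  have hcap := hc (Fin.cons t y) (Fin.cases ht hy)
  rw [← eval_slice, Fin.prod_cons] at hcap
  linarith

end IsCapacityLowerBound

theorem coeff_one_coeff_one_finSuccEquiv (p : MvPolynomial (Fin (n + 1)) R) :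
    coeff (Finsupp.equivFunOnFinite.symm 1) ((finSuccEquiv R n p).coeff 1)
      = coeff (Finsupp.equivFunOnFinite.symm 1) p := by
  rw [finSuccEquiv_coeff_coeff]
  congr 1
  ext i
  refine Fin.cases ?_ (fun j ↦ ?_) i <;> simp

theorem factorial_div_pow_succ (n : ℕ) :
    ((n + 1).factorial : ℝ) / ((n + 1 : ℕ) : ℝ) ^ (n + 1)
      = (n / (n + 1)) ^ n * (n.factorial / (n : ℝ) ^ n) := by
  rcases eq_or_ne n 0 with rfl | hn
  · simp
  · rw [Nat.factorial_succ, div_pow]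
    push_cast
    field_simp
    ring

/-- **Gurvits' capacity inequality**. -/
theorem IsStronglyStable.mul_factorial_div_pow_le_coeff {p : MvPolynomial (Fin n) ℝ}
    (hs : IsStronglyStable p) (hp : p.IsHomogeneous n) {c : ℝ} (hc : IsCapacityLowerBound p c) :
    c * (n.factorial / (n : ℝ) ^ n) ≤ coeff (Finsupp.equivFunOnFinite.symm 1) p := by
  induction n generalizing c with
  | zero =>
    have hone : (Finsupp.equivFunOnFinite.symm 1 : Fin 0 →₀ ℕ) = 0 := Subsingleton.elim _ _
    have hcap := hc 0 finZeroElim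
    rw [p.eq_C_of_isEmpty] at hcap
    simpa [hone] using hcap
  | succ n ih =>
    rcases Nat.eq_zero_or_pos n with rfl | hn
    · have hone : (Finsupp.equivFunOnFinite.symm 1 : Fin 1 →₀ ℕ) = Finsupp.single 0 1 := by
        ext
        simp
      have hcap := hc (Pi.single 0 1) (by simp)
      rw [aeval_single_one_of_isHomogeneous hp] at hcap
      simpa [hone] using hcap
    · have : NeZero n := ⟨hn.ne'⟩
      have hp' := hp.finSuccEquiv_coeff_isHomogeneous 1 n (add_comm 1 n)
      rw [factorial_div_pow_succ, ← mul_assoc, ← coeff_one_coeff_one_finSuccEquiv]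
      exact ih (hs.coeff_one_finSuccEquiv hp n.succ_ne_zero) hp' (hc.coeff_one_finSuccEquiv hs hp)

end StablePolynomial

section Permanent

open MvPolynomial Matrix

variable {ι κ R : Type*} [Fintype ι] [Fintype κ]

/-- The product of the linear forms given by the rows of `A`. Its mixed coefficient, that of the
product of all the variables, is the permanent of `A`. -/
def rowProductPoly [CommSemiring R] (A : Matrix ι κ R) : MvPolynomial κ R :=
  ∏ i, ∑ j, C (A i j) * X j

theorem isHomogeneous_rowProductPoly [CommSemiring R] (A : Matrix ι κ R) :
    (rowProductPoly A).IsHomogeneous (Fintype.card ι) := by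
  have hrow (i : ι) : (∑ j, C (A i j) * X j : MvPolynomial κ R).IsHomogeneous 1 :=
    IsHomogeneous.sum _ _ _ fun j _ ↦ isHomogeneous_C_mul_X (A i j) j
  simpa [rowProductPoly] using IsHomogeneous.prod Finset.univ _ (fun _ ↦ 1) fun i _ ↦ hrow i

theorem isStronglyStable_rowProductPoly {A : Matrix ι κ ℝ} (hA : ∀ i j, 0 < A i j) :
    IsStronglyStable (rowProductPoly A) := by
  rintro z hz ⟨j₀, hj₀⟩
  rw [rowProductPoly, map_prod, Finset.prod_ne_zero_iff]
  intro i _ hzero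
  have hre : ∑ j, A i j * (z j).re = 0 := by simpa using congrArg Complex.re hzero
  exact (Finset.sum_pos' (fun j _ ↦ mul_nonneg (hA i j).le (hz j))
    ⟨j₀, Finset.mem_univ _, mul_pos (hA i j₀) hj₀⟩).ne' hre

theorem sum_single_eq_one_iff_bijective (f : ι → ι) :
    ∑ i, Finsupp.single (f i) 1 = Finsupp.equivFunOnFinite.symm (1 : ι → ℕ) ↔ f.Bijective := by
  classical
  constructor
  · refine fun h ↦ Finite.surjective_iff_bijective.mp fun j ↦ ?_
    by_contra! hj
    simpa [Finsupp.finsetSum_apply, hj] using DFunLike.congr_fun h j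
  · intro hf
    rw [hf.sum_comp fun j ↦ Finsupp.single j 1]
    ext j
    simp [Finsupp.single_apply, Finsupp.finsetSum_apply]

variable [DecidableEq ι]

theorem permanent_eq_sum_prod_apply [CommSemiring R] (A : Matrix ι ι R) :
    A.permanent = ∑ σ : Equiv.Perm ι, ∏ i, A i (σ i) := by
  rw [← permanent_transpose]
  rfl

theorem permanent_eq_sum_bijective [CommSemiring R] (A : Matrix ι ι R) :
    A.permanent = ∑ f : ι → ι with f.Bijective, ∏ i, A i (f i) := by
  rw [permanent_eq_sum_prod_apply, ← Finset.sum_subtype_eq_sum_filter, Finset.subtype_univ]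
  exact (Equiv.sum_comp Equiv.bijectiveEquiv fun σ : Equiv.Perm ι ↦ ∏ i, A i (σ i)).symm

theorem permanent_reindex [DecidableEq κ] [CommSemiring R] (e : ι ≃ κ) (A : Matrix ι ι R) :
    (A.reindex e e).permanent = A.permanent := by
  refine Fintype.sum_equiv e.permCongr.symm _ _ fun σ ↦ Fintype.prod_equiv e.symm _ _ fun i ↦ ?_
  simp

theorem permanent_le_prod_sum [CommSemiring R] [PartialOrder R] [IsOrderedRing R]
    {A : Matrix ι ι R} (hA : ∀ i j, 0 ≤ A i j) : A.permanent ≤ ∏ i, ∑ j, A i j := by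
  rw [permanent_eq_sum_bijective, Fintype.prod_sum fun i j ↦ A i j]
  exact Finset.sum_le_sum_of_subset_of_nonneg (Finset.filter_subset _ _)
    fun f _ _ ↦ Finset.prod_nonneg fun i _ ↦ hA i (f i)

theorem coeff_one_rowProductPoly [CommSemiring R] (A : Matrix ι ι R) :
    coeff (Finsupp.equivFunOnFinite.symm 1) (rowProductPoly A) = A.permanent := by
  have hmonomial (f : ι → ι) : ∏ i, C (A i (f i)) * X (f i)
      = monomial (∑ i, Finsupp.single (f i) 1) (∏ i, A i (f i)) := by
    simp only [C_mul_X_eq_monomial, ← monomial_sum_prod]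
  rw [rowProductPoly, Fintype.prod_sum, coeff_sum, permanent_eq_sum_bijective, Finset.sum_filter]
  simp only [hmonomial, coeff_monomial, sum_single_eq_one_iff_bijective]

theorem prod_le_prod_sum_mul_of_mem_doublyStochastic {A : Matrix ι ι ℝ}
    (hA : A ∈ doublyStochastic ℝ ι) {x : ι → ℝ} (hx : ∀ i, 0 < x i) :
    ∏ i, x i ≤ ∏ i, ∑ j, A i j * x j :=
  calc ∏ j, x j = ∏ j, ∏ i, x j ^ A i j := Finset.prod_congr rfl fun j _ ↦ by
        rw [← Real.rpow_sum_of_pos (hx j), sum_col_of_mem_doublyStochastic hA, Real.rpow_one]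
    _ = ∏ i, ∏ j, x j ^ A i j := Finset.prod_comm
    _ ≤ ∏ i, ∑ j, A i j * x j := Finset.prod_le_prod
        (fun i _ ↦ Finset.prod_nonneg fun j _ ↦ Real.rpow_nonneg (hx j).le _)
        fun i _ ↦ Real.geom_mean_le_arith_mean_weighted _ _ _
          (fun j _ ↦ nonneg_of_mem_doublyStochastic hA) (sum_row_of_mem_doublyStochastic hA i)
          fun j _ ↦ (hx j).le

theorem isCapacityLowerBound_rowProductPoly {A : Matrix ι ι ℝ} (hA : A ∈ doublyStochastic ℝ ι) :
    IsCapacityLowerBound (rowProductPoly A) 1 := fun x hx ↦ by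
  simpa [rowProductPoly] using prod_le_prod_sum_mul_of_mem_doublyStochastic hA hx

theorem factorial_div_pow_le_permanent_of_pos {A : Matrix ι ι ℝ} (hA : A ∈ doublyStochastic ℝ ι)
    (hpos : ∀ i j, 0 < A i j) :
    ((Fintype.card ι).factorial : ℝ) / (Fintype.card ι : ℝ) ^ Fintype.card ι ≤ A.permanent := by
  set e := Fintype.equivFin ι
  have hhom := isHomogeneous_rowProductPoly (A.reindex e e)
  rw [Fintype.card_fin] at hhom
  have hstable : IsStronglyStable (rowProductPoly (A.reindex e e)) :=
    isStronglyStable_rowProductPoly fun i j ↦ hpos (e.symm i) (e.symm j)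
  have := hstable.mul_factorial_div_pow_le_coeff hhom
    (isCapacityLowerBound_rowProductPoly (reindex_mem_doublyStochastic hA))
  rwa [one_mul, coeff_one_rowProductPoly, permanent_reindex] at this

theorem uniform_mem_doublyStochastic [Nonempty ι] :
    (of fun _ _ ↦ (Fintype.card ι : ℝ)⁻¹) ∈ doublyStochastic ℝ ι := by
  have hcard : (Fintype.card ι : ℝ) ≠ 0 := Nat.cast_ne_zero.mpr Fintype.card_ne_zero
  simp [mem_doublyStochastic_iff_sum, hcard]

/-- The **van der Waerden conjecture**, proved by Egorychev and Falikman. -/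
theorem factorial_div_pow_le_permanent {A : Matrix ι ι ℝ} (hA : A ∈ doublyStochastic ℝ ι) :
    ((Fintype.card ι).factorial : ℝ) / (Fintype.card ι : ℝ) ^ Fintype.card ι ≤ A.permanent := by
  cases isEmpty_or_nonempty ι
  · simp [permanent_isEmpty]
  set J : Matrix ι ι ℝ := of fun _ _ ↦ (Fintype.card ι : ℝ)⁻¹
  have hcont : Continuous fun ε : ℝ ↦ ((1 - ε) • A + ε • J).permanent := by
    simp only [permanent, Matrix.add_apply, Matrix.smul_apply]
    fun_prop
  have hlim := (hcont.tendsto 0).mono_left (nhdsWithin_le_nhds (s := Set.Ioi 0))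
  simp only [sub_zero, one_smul, zero_smul, add_zero] at hlim
  refine ge_of_tendsto hlim ?_
  filter_upwards [Ioo_mem_nhdsGT (zero_lt_one' ℝ)] with ε ⟨hε₀, hε₁⟩
  refine factorial_div_pow_le_permanent_of_pos (convex_doublyStochastic hA
    uniform_mem_doublyStochastic (sub_nonneg.mpr hε₁.le) hε₀.le (sub_add_cancel 1 ε)) fun i j ↦ ?_
  have hJ : 0 < ε * (Fintype.card ι : ℝ)⁻¹ := by positivity
  exact add_pos_of_nonneg_of_pos
    (mul_nonneg (sub_nonneg.mpr hε₁.le) (nonneg_of_mem_doublyStochastic hA)) hJ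

end Permanent

section Decompositions

open Matrix

variable {M n : ℕ} {k : Matrix (Fin n) (Fin n) ℕ} {σ : Equiv.Perm (Fin n)}

theorem isDS_permMat (σ : Equiv.Perm (Fin n)) : isDS 1 n (permMat σ) :=
  ⟨fun i ↦ by simp [permMat], fun j ↦ by simp [permMat, ← Equiv.eq_symm_apply]⟩

theorem permMat_le_iff : (∀ i j, permMat σ i j ≤ k i j) ↔ ∏ i, k i (σ i) ≠ 0 := by
  simp only [Finset.prod_ne_zero_iff, Finset.mem_univ, true_imp_iff]
  refine forall_congr' fun i ↦ ⟨fun h hzero ↦ ?_, fun h j ↦ ?_⟩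
  · simpa [permMat, hzero] using h (σ i)
  · rcases eq_or_ne (σ i) j with rfl | hj
    · simpa [permMat, Nat.one_le_iff_ne_zero] using h
    · simp [permMat, hj]

theorem isDS.sub_permMat_s4 (hk : isDS (M + 1) n k) (hσ : ∏ i, k i (σ i) ≠ 0) :
    isDS M n (k - permMat σ) := by
  have hle := permMat_le_iff.mpr hσ
  refine ⟨fun i ↦ ?_, fun j ↦ ?_⟩
  · simp only [Matrix.sub_apply]
    rw [Finset.sum_tsub_distrib _ fun j _ ↦ hle i j, hk.1, (isDS_permMat σ).1,
      Nat.add_sub_cancel]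
  · simp only [Matrix.sub_apply]
    rw [Finset.sum_tsub_distrib _ fun i _ ↦ hle i j, hk.2, (isDS_permMat σ).2,
      Nat.add_sub_cancel]

theorem permMat_add_eq_iff {l : Matrix (Fin n) (Fin n) ℕ} :
    permMat σ + l = k ↔ ∏ i, k i (σ i) ≠ 0 ∧ l = k - permMat σ := by
  rw [← permMat_le_iff]
  constructor
  · rintro rfl
    exact ⟨fun i j ↦ Nat.le_add_right _ _, by ext; simp⟩
  · rintro ⟨hle, rfl⟩
    ext i j
    exact Nat.add_sub_cancel' (hle i j)

theorem Ccoef_succ (M : ℕ) (k : Matrix (Fin n) (Fin n) ℕ) :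
    Ccoef (M + 1) n k
      = ∑ σ : Equiv.Perm (Fin n) with ∏ i, k i (σ i) ≠ 0, Ccoef M n (k - permMat σ) := by
  have hcons : Ccoef (M + 1) n k = Nat.card (Σ σ : Equiv.Perm (Fin n),
      {τ : Fin M → Equiv.Perm (Fin n) // permMat σ + ∑ m, permMat (τ m) = k}) := by
    refine Nat.card_congr (((Fin.consEquiv _).symm.subtypeEquiv fun τ ↦ ?_).trans
      (Equiv.subtypeProdEquivSigmaSubtype
        fun σ (τ : Fin M → Equiv.Perm (Fin n)) ↦ permMat σ + ∑ m, permMat (τ m) = k))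
    rw [Fin.sum_univ_succ]
    rfl
  rw [hcons, Nat.card_sigma, Finset.sum_filter]
  refine Finset.sum_congr rfl fun σ _ ↦ ?_
  simp only [permMat_add_eq_iff]
  split_ifs with hσ <;> simp [hσ, Ccoef]

theorem prod_factorial_eq_mul_prod_factorial_sub (hσ : ∏ i, k i (σ i) ≠ 0) :
    ∏ i, ∏ j, (k i j).factorial
      = (∏ i, k i (σ i)) * ∏ i, ∏ j, ((k - permMat σ) i j).factorial := by
  rw [← Finset.prod_mul_distrib]
  refine Finset.prod_congr rfl fun i _ ↦ ?_
  have hi : k i (σ i) ≠ 0 := Finset.prod_ne_zero_iff.mp hσ i (Finset.mem_univ i)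
  have hoff : ∏ j ∈ Finset.univ.erase (σ i), ((k - permMat σ) i j).factorial
      = ∏ j ∈ Finset.univ.erase (σ i), (k i j).factorial :=
    Finset.prod_congr rfl fun j hj ↦ by simp [permMat, (Finset.ne_of_mem_erase hj).symm]
  rw [← Finset.mul_prod_erase _ _ (Finset.mem_univ (σ i)),
    ← Finset.mul_prod_erase _ (fun j ↦ ((k - permMat σ) i j).factorial) (Finset.mem_univ (σ i)),
    hoff, ← mul_assoc]
  simp [permMat, Nat.mul_factorial_pred hi]

/-- The number of ways to decompose the bipartite multigraph with `k i j` parallel edges from `i` to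
`j` into an ordered list of `M` perfect matchings, when parallel edges are told apart by labels. -/
def labelledCcoef (M n : ℕ) (k : Matrix (Fin n) (Fin n) ℕ) : ℕ :=
  Ccoef M n k * ∏ i, ∏ j, (k i j).factorial

theorem isDS.labelledCcoef_zero (hk : isDS 0 n k) : labelledCcoef 0 n k = 1 := by
  obtain rfl : k = 0 := by
    ext i j
    exact Finset.sum_eq_zero_iff.mp (hk.1 i) j (Finset.mem_univ j)
  simp [labelledCcoef, Ccoef]

theorem labelledCcoef_succ (M : ℕ) (k : Matrix (Fin n) (Fin n) ℕ) :
    labelledCcoef (M + 1) n k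
      = ∑ σ : Equiv.Perm (Fin n), (∏ i, k i (σ i)) * labelledCcoef M n (k - permMat σ) := by
  rw [labelledCcoef, Ccoef_succ, Finset.sum_mul, Finset.sum_filter]
  refine Finset.sum_congr rfl fun σ _ ↦ ?_
  split_ifs with hσ
  · rw [prod_factorial_eq_mul_prod_factorial_sub hσ, labelledCcoef]
    ring
  · rw [not_not.mp hσ, zero_mul]

theorem isDS.labelledCcoef_succ_le (hk : isDS (M + 1) n k) {B : ℕ}
    (hB : ∀ l, isDS M n l → labelledCcoef M n l ≤ B) :
    labelledCcoef (M + 1) n k ≤ k.permanent * B := by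
  rw [labelledCcoef_succ, permanent_eq_sum_prod_apply, Finset.sum_mul]
  refine Finset.sum_le_sum fun σ _ ↦ ?_
  rcases eq_or_ne (∏ i, k i (σ i)) 0 with hσ | hσ
  · simp [hσ]
  · exact Nat.mul_le_mul_left _ (hB _ (hk.sub_permMat_s4 hσ))

theorem isDS.le_labelledCcoef_succ (hk : isDS (M + 1) n k) {B : ℝ}
    (hB : ∀ l, isDS M n l → B ≤ labelledCcoef M n l) :
    k.permanent * B ≤ labelledCcoef (M + 1) n k := by
  rw [labelledCcoef_succ, permanent_eq_sum_prod_apply, Nat.cast_sum, Nat.cast_sum, Finset.sum_mul]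
  refine Finset.sum_le_sum fun σ _ ↦ ?_
  rw [Nat.cast_mul]
  rcases eq_or_ne (∏ i, k i (σ i)) 0 with hσ | hσ
  · simp [hσ]
  · exact mul_le_mul_of_nonneg_left (hB _ (hk.sub_permMat_s4 hσ)) (Nat.cast_nonneg _)

theorem isDS.permanent_le (hk : isDS M n k) : k.permanent ≤ M ^ n := by
  simpa [hk.1] using permanent_le_prod_sum (A := k) fun _ _ ↦ Nat.zero_le _

theorem isDS.le_permanent (hk : isDS M n k) :
    (M : ℝ) ^ n * (n.factorial / (n : ℝ) ^ n) ≤ k.permanent := by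
  obtain ⟨A, hA, hkA⟩ := (exists_mem_doublyStochastic_eq_smul_iff (M := k.map (Nat.cast : ℕ → ℝ))
    (Nat.cast_nonneg M)).mpr ⟨fun i j ↦ Nat.cast_nonneg _,
      fun i ↦ by simp [← Nat.cast_sum, hk.1], fun j ↦ by simp [← Nat.cast_sum, hk.2]⟩
  have hperm : (k.permanent : ℝ) = (M : ℝ) ^ n * A.permanent := by
    rw [show (k.permanent : ℝ) = (k.map Nat.cast).permanent by simp [permanent], hkA,
      permanent_smul, Fintype.card_fin]
  rw [hperm]
  gcongr
  simpa using factorial_div_pow_le_permanent hA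

theorem isDS.permanent_pos (hk : isDS (M + 1) n k) : 0 < k.permanent := by
  have hfac : 0 < (n.factorial : ℝ) / (n : ℝ) ^ n := by
    rcases eq_or_ne n 0 with rfl | hn
    · simp
    · positivity
  have hpos : 0 < ((M + 1 : ℕ) : ℝ) ^ n * (n.factorial / (n : ℝ) ^ n) := by positivity
  exact_mod_cast hpos.trans_le hk.le_permanent

theorem isDS.labelledCcoef_le (hk : isDS M n k) : labelledCcoef M n k ≤ M.factorial ^ n := by
  induction M generalizing k with
  | zero => simp [hk.labelledCcoef_zero]
  | succ M ih =>
    calc labelledCcoef (M + 1) n k ≤ k.permanent * M.factorial ^ n :=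
          hk.labelledCcoef_succ_le fun _ ↦ ih
      _ ≤ (M + 1) ^ n * M.factorial ^ n := by gcongr; exact hk.permanent_le
      _ = (M + 1).factorial ^ n := by rw [← mul_pow, Nat.factorial_succ]

theorem isDS.le_labelledCcoef (hk : isDS (M + 1) n k) :
    ((M + 1).factorial : ℝ) ^ n * (n.factorial / (n : ℝ) ^ n) ^ M ≤ labelledCcoef (M + 1) n k := by
  induction M generalizing k with
  | zero =>
    -- The permanent is a positive integer, so the factor `n! / n ^ n` is not lost at this step.
    calc ((0 + 1).factorial : ℝ) ^ n * (n.factorial / (n : ℝ) ^ n) ^ 0 = 1 * 1 := by simp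
      _ ≤ (k.permanent : ℝ) * 1 := by gcongr; exact_mod_cast hk.permanent_pos
      _ ≤ labelledCcoef 1 n k :=
        hk.le_labelledCcoef_succ fun l hl ↦ by simp [hl.labelledCcoef_zero]
  | succ M ih =>
    set c : ℝ := n.factorial / (n : ℝ) ^ n
    calc ((M + 1 + 1).factorial : ℝ) ^ n * c ^ (M + 1)
        = ((M + 1 + 1 : ℕ) : ℝ) ^ n * c * (((M + 1).factorial : ℝ) ^ n * c ^ M) := by
          rw [Nat.factorial_succ, Nat.cast_mul, mul_pow, pow_succ]
          ring
      _ ≤ k.permanent * (((M + 1).factorial : ℝ) ^ n * c ^ M) := by gcongr; exact hk.le_permanent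
      _ ≤ labelledCcoef (M + 1 + 1) n k := hk.le_labelledCcoef_succ fun _ ↦ ih

theorem mul_CscS (M : ℕ) (k : Matrix (Fin n) (Fin n) ℕ) :
    ((M : ℝ) ^ M / (M.factorial : ℝ)) ^ n * CscS M n k
      = (M.factorial : ℝ) ^ n / ∏ i, ∏ j, ((k i j).factorial : ℝ) := by
  have hpow : (M : ℝ) ^ M ≠ 0 := by exact_mod_cast M.pow_self_pos.ne'
  rw [CscS, div_pow, two_mul, pow_add, mul_comm n M, pow_mul]
  field_simp

end Decompositions

/-- For `n, M ≥ 1` and `k ∈ K(M,n)`: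
`(M^M/M!)^n · (n!/n^n)^{M−1} · C_{scS,M,n}(k) ≤ C_{M,n}(k) ≤ (M^M/M!)^n · C_{scS,M,n}(k)`. -/
theorem statement_4 (n M : ℕ) (hn : 1 ≤ n) (hM : 1 ≤ M)
    (k : Matrix (Fin n) (Fin n) ℕ) (hk : isDS M n k) :
    ((M : ℝ) ^ M / (M.factorial : ℝ)) ^ n * ((n.factorial : ℝ) / (n : ℝ) ^ n) ^ (M - 1) *
        CscS M n k ≤ (Ccoef M n k : ℝ) ∧
      (Ccoef M n k : ℝ) ≤ ((M : ℝ) ^ M / (M.factorial : ℝ)) ^ n * CscS M n k := by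
  obtain ⟨m, rfl⟩ : ∃ m, M = m + 1 := Nat.exists_eq_add_of_le' hM
  have hlower := hk.le_labelledCcoef
  have hupper : (labelledCcoef (m + 1) n k : ℝ) ≤ ((m + 1).factorial : ℝ) ^ n := by
    exact_mod_cast hk.labelledCcoef_le
  simp only [labelledCcoef, Nat.cast_mul, Nat.cast_prod] at hlower hupper
  have hpos : 0 < ∏ i, ∏ j, ((k i j).factorial : ℝ) := by positivity
  rw [mul_right_comm, mul_CscS, div_mul_eq_mul_div, div_le_iff₀ hpos,
    le_div_iff₀ hpos, Nat.add_sub_cancel]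
  exact ⟨hlower, hupper⟩
end
end
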